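/- arXiv:1905.00368 — 3 statements merged into one kernel-verified Lean document; each statement's English description precedes it below -/
import Mathlib

section
/- Let μ and (μ_n)_n be elements of 𝒫_p(X̄). Then μ_n → μ in the topology induced by AW_p (built from ρ) if and only if both: (i) μ_n → μ in the topology induced by the adapted distance AW built from the bounded compatible complete metric min(1,ρ) in place of ρ, and (ii) the p-th moments converge, i.e. ∫ ρ̄(x̄_0, x)^p dμ_n(x) → ∫ ρ̄(x̄_0, x)^p dμ(x) for some (equivalently every) base point x̄_0 ∈ X̄. -/
open MeasureTheory ProbabilityTheory ENNReal Filter Topology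

noncomputable section

namespace AWPaper

/-! ### Generic constructions -/

variable {α β : Type*}

/-- The set of couplings of two measures. -/
def Cpl [MeasurableSpace α] [MeasurableSpace β] (μ : Measure α) (ν : Measure β) :
    Set (Measure (α × β)) :=
  {π | π.map Prod.fst = μ ∧ π.map Prod.snd = ν}

/-- The `p`-Wasserstein distance (with values in `ℝ≥0∞`) associated to an
`ℝ≥0∞`-valued distance function `d`. -/
def Wp [MeasurableSpace α] (p : ℝ) (d : α → α → ℝ≥0∞) (μ ν : Measure α) : ℝ≥0∞ :=
  ⨅ π ∈ Cpl μ ν, (∫⁻ z, d z.1 z.2 ^ p ∂π) ^ (1 / p)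

/-- The topology generated by the open balls of an `ℝ≥0∞`-valued distance
function.  For a genuine metric this is the metric topology. -/
def ballTop (d : α → α → ℝ≥0∞) : TopologicalSpace α :=
  TopologicalSpace.generateFrom {s | ∃ x ε, 0 < ε ∧ s = {y | d x y < ε}}

/-- The product distance of two `ℝ≥0∞`-valued distances, `ℓ^p`-style. -/
def prodDist (p : ℝ) (d₁ : α → α → ℝ≥0∞) (d₂ : β → β → ℝ≥0∞) :
    α × β → α × β → ℝ≥0∞ :=
  fun u v => (d₁ u.1 v.1 ^ p + d₂ u.2 v.2 ^ p) ^ (1 / p)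

/-- Membership in the `p`-Wasserstein space: a probability measure with finite
`p`-th moment (w.r.t. the distance function `d`). -/
def MemPp [MeasurableSpace α] (p : ℝ) (d : α → α → ℝ≥0∞) (μ : Measure α) : Prop :=
  IsProbabilityMeasure μ ∧ ∃ x₀, ∫⁻ x, d x₀ x ^ p ∂μ ≠ ∞

/-- The weak topology on measures induced by integration of bounded continuous
functions, for a given topology `τ` on the base space. -/
def weakTop [MeasurableSpace α] (τ : TopologicalSpace α) : TopologicalSpace (Measure α) :=
  TopologicalSpace.induced
    (fun μ => fun f : @BoundedContinuousFunction α ℝ τ _ => ∫ x, f x ∂μ)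
    Pi.topologicalSpace

/-- The product topology built from two explicitly given topologies. -/
def prodTop (τ₁ : TopologicalSpace α) (τ₂ : TopologicalSpace β) : TopologicalSpace (α × β) :=
  TopologicalSpace.induced Prod.fst τ₁ ⊓ TopologicalSpace.induced Prod.snd τ₂

/-- An everywhere-defined version of the disintegration kernel: it agrees with
`Measure.condKernel` on finite measures. -/
def condK [MeasurableSpace α] [MeasurableSpace β] [StandardBorelSpace β] [Nonempty β]
    (ρ : Measure (α × β)) : Kernel α β :=
  letI := Classical.dec (IsFiniteMeasure ρ)
  if h : IsFiniteMeasure ρ then @Measure.condKernel α β _ _ _ _ ρ h else 0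

/-- The disintegration map `𝒫(A × B) → 𝒫(A × 𝒫(B))`. -/
def disint [MeasurableSpace α] [MeasurableSpace β] [StandardBorelSpace β] [Nonempty β]
    (μ : Measure (α × β)) : Measure (α × Measure β) :=
  μ.map (fun z => (z.1, condK μ z.1))

/-- The intensity ("und") map `𝒫(A × 𝒫(B)) → 𝒫(A × B)`. -/
def und [MeasurableSpace α] [MeasurableSpace β] (μ : Measure (α × Measure β)) :
    Measure (α × β) :=
  μ.bind (fun z => (Measure.dirac z.1).prod z.2)

/-! ### Path spaces -/

variable {X : Type*} [MeasurableSpace X]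

/-- The path-space distance `ρ̄((x_t),(y_t)) = (∑ ρ(x_t,y_t)^p)^{1/p}`. -/
def pathDist (p : ℝ) (d : X → X → ℝ≥0∞) {N : ℕ} :
    (Fin N → X) → (Fin N → X) → ℝ≥0∞ :=
  fun x y => (∑ t, d (x t) (y t) ^ p) ^ (1 / p)

/-- The first `t` coordinates of a path. -/
def restr {N : ℕ} (t : ℕ) (h : t ≤ N) (x : Fin N → X) : Fin t → X :=
  fun s => x (Fin.castLE h s)

/-- The last `N - t` coordinates of a path. -/
def tailr {N : ℕ} (t : ℕ) (h : t ≤ N) (x : Fin N → X) : Fin (N - t) → X :=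
  fun s => x ⟨t + s.1, by have := s.2; omega⟩

/-- A coupling `π` of two path measures is causal: for every `t` and Borel
`A ⊆ 𝒳^t`, `π((Y_1,…,Y_t) ∈ A | X) = π((Y_1,…,Y_t) ∈ A | X_1,…,X_t)` a.s. -/
def Causal {N : ℕ} (π : Measure ((Fin N → X) × (Fin N → X))) : Prop :=
  ∀ (t : ℕ) (h : t ≤ N) (A : Set (Fin t → X)), MeasurableSet A →
    (π[fun z => A.indicator (fun _ => (1 : ℝ)) (restr t h z.2) |
        MeasurableSpace.comap Prod.fst inferInstance])
      =ᵐ[π]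
    (π[fun z => A.indicator (fun _ => (1 : ℝ)) (restr t h z.2) |
        MeasurableSpace.comap (fun z => restr t h z.1) inferInstance])

/-- Bicausal couplings. -/
def Bicausal {N : ℕ} (π : Measure ((Fin N → X) × (Fin N → X))) : Prop :=
  Causal π ∧ Causal (π.map Prod.swap)

/-- The causal Wasserstein "distance" `CW_p`. -/
def CW (p : ℝ) (d : X → X → ℝ≥0∞) {N : ℕ} (μ ν : Measure (Fin N → X)) : ℝ≥0∞ :=
  ⨅ π ∈ {π ∈ Cpl μ ν | Causal π}, (∫⁻ z, pathDist p d z.1 z.2 ^ p ∂π) ^ (1 / p)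

/-- The symmetrized causal Wasserstein distance `SCW_p`. -/
def SCW (p : ℝ) (d : X → X → ℝ≥0∞) {N : ℕ} (μ ν : Measure (Fin N → X)) : ℝ≥0∞ :=
  max (CW p d μ ν) (CW p d ν μ)

/-- The adapted (nested, bicausal) Wasserstein distance `AW_p`. -/
def AW (p : ℝ) (d : X → X → ℝ≥0∞) {N : ℕ} (μ ν : Measure (Fin N → X)) : ℝ≥0∞ :=
  ⨅ π ∈ {π ∈ Cpl μ ν | Bicausal π}, (∫⁻ z, pathDist p d z.1 z.2 ^ p ∂π) ^ (1 / p)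

/-! ### Nested spaces (Pflug's nested distributions / Vershik's iterated spaces) -/

/-- A measurable space together with an `ℝ≥0∞`-valued distance. -/
structure QMS : Type 1 where
  carrier : Type
  inst : MeasurableSpace carrier
  dist : carrier → carrier → ℝ≥0∞

/-- The nested sequence of spaces: `nest X _ d p 0 = 𝒳` (this is `𝒳_N`), and
`nest X _ d p (k+1) = 𝒳 × 𝒫(nest X _ d p k)` with the nested distance
`D = (ρ^p + 𝒲_p^p)^{1/p}`.  Thus `𝒳_1` (for `N = k+1` time points) is
`nest X _ d p k`. -/
def nest (X : Type) (mX : MeasurableSpace X) (d : X → X → ℝ≥0∞) (p : ℝ) : ℕ → QMS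
  | 0 => ⟨X, mX, d⟩
  | (k + 1) =>
    let Q := nest X mX d p k
    ⟨X × @Measure Q.carrier Q.inst,
      @Prod.instMeasurableSpace _ _ mX (@Measure.instMeasurableSpace _ Q.inst),
      fun a b => (d a.1 b.1 ^ p + (@Wp _ Q.inst p Q.dist a.2 b.2) ^ p) ^ (1 / p)⟩

section NMapSec

variable (Y : Type) [mY : MeasurableSpace Y] [TopologicalSpace Y] [PolishSpace Y]
  [BorelSpace Y] [Nonempty Y]

/-- The map `𝒩` sending the law of a process with `k+1` time steps to the
corresponding nested distribution, via iterated regular conditional laws. -/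
def NMap (d : Y → Y → ℝ≥0∞) (p : ℝ) :
    ∀ k : ℕ, Measure (Fin (k + 1) → Y) →
      @Measure (nest Y mY d p k).carrier (nest Y mY d p k).inst
  | 0, μ =>
    letI : MeasurableSpace (nest Y mY d p 0).carrier := (nest Y mY d p 0).inst
    μ.map (fun x => x 0)
  | (k + 1), μ =>
    letI : MeasurableSpace (nest Y mY d p k).carrier := (nest Y mY d p k).inst
    letI : MeasurableSpace (nest Y mY d p (k + 1)).carrier := (nest Y mY d p (k + 1)).inst
    (μ.map (fun x => x 0)).map
      (fun x₀ => (x₀, NMap d p k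
        ((condK (μ.map (fun x => (x 0, fun s : Fin (k + 1) => x s.succ)))) x₀)))

end NMapSec

section PathStructures

variable {Y : Type*} [mY : MeasurableSpace Y]

/-- A process `L` is adapted: `L t` depends only on the first `t+1` coordinates. -/
def AdaptedProc {N : ℕ} (L : Fin N → (Fin N → Y) → ℝ) : Prop :=
  ∀ (t : Fin N) (x y : Fin N → Y), (∀ s : Fin N, s ≤ t → x s = y s) → L t x = L t y

/-- `τ` is a stopping time of the canonical filtration on the path space. -/
def IsStopTime {N : ℕ} (τ : (Fin N → Y) → Fin N) : Prop :=
  ∀ t : Fin N,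
    MeasurableSet[MeasurableSpace.comap (restr (X := Y) (t.1 + 1) t.2) inferInstance]
      {x | τ x = t}

/-- The optimal stopping value `v^L(μ)`. -/
def stopVal {N : ℕ} (L : Fin N → (Fin N → Y) → ℝ) (μ : Measure (Fin N → Y)) : ℝ :=
  ⨅ τ : {τ : (Fin N → Y) → Fin N // IsStopTime τ}, ∫ x, L (τ.1 x) x ∂μ

variable [TopologicalSpace Y]

/-- `AC(X̄)`: adapted processes which are continuous and bounded. -/
def ACbdd {N : ℕ} (L : Fin N → (Fin N → Y) → ℝ) : Prop :=
  (∀ t, Continuous (L t)) ∧ AdaptedProc L ∧ ∃ C : ℝ, ∀ t x, |L t x| ≤ C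

/-- `AC_p(X̄)`: adapted continuous processes of growth of order `p`. -/
def ACp (p : ℝ) (d : Y → Y → ℝ≥0∞) {N : ℕ} (L : Fin N → (Fin N → Y) → ℝ) : Prop :=
  (∀ t, Continuous (L t)) ∧ AdaptedProc L ∧
    ∃ (C : ℝ) (x₀ : Fin N → Y), ∀ t x, |L t x| ≤ C * (1 + ((pathDist p d x₀ x) ^ p).toReal)

/-- The optimal stopping topology (weak version, bounded continuous rewards). -/
def stopTopW (N : ℕ) : TopologicalSpace (Measure (Fin N → Y)) :=
  ⨅ L : {L : Fin N → (Fin N → Y) → ℝ // ACbdd L},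
    TopologicalSpace.induced (stopVal L.1) inferInstance

/-- The `𝒲_p`-optimal stopping topology. -/
def stopTopWp (p : ℝ) (d : Y → Y → ℝ≥0∞) (N : ℕ) :
    TopologicalSpace (Measure (Fin N → Y)) :=
  ⨅ L : {L : Fin N → (Fin N → Y) → ℝ // ACp p d L},
    TopologicalSpace.induced (stopVal L.1) inferInstance

variable [PolishSpace Y] [BorelSpace Y] [Nonempty Y]

/-- Hellwig's map `I_t`, sending `μ` to the joint law of the first `t`
coordinates together with the conditional law of the remaining coordinates. -/
def infoMap (N t : ℕ) (h : t ≤ N) (μ : Measure (Fin N → Y)) :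
    Measure ((Fin t → Y) × Measure (Fin (N - t) → Y)) :=
  μ.map (fun x => (restr t h x,
    condK (μ.map (fun y => (restr t h y, tailr t h y))) (restr t h x)))

/-- Hellwig's information topology (weak version). -/
def infoTopW (N : ℕ) : TopologicalSpace (Measure (Fin N → Y)) :=
  ⨅ (t : ℕ) (_ : 1 ≤ t) (h : t ≤ N - 1),
    TopologicalSpace.induced (infoMap N t (le_trans h (Nat.sub_le N 1)))
      (weakTop (prodTop Pi.topologicalSpace (weakTop Pi.topologicalSpace)))

/-- The `𝒲_p`-information topology. -/
def infoTopWp (p : ℝ) (d : Y → Y → ℝ≥0∞) (N : ℕ) :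
    TopologicalSpace (Measure (Fin N → Y)) :=
  ⨅ (t : ℕ) (_ : 1 ≤ t) (h : t ≤ N - 1),
    TopologicalSpace.induced (infoMap N t (le_trans h (Nat.sub_le N 1)))
      (ballTop (Wp p (prodDist p (pathDist p d) (Wp p (pathDist p d)))))

/-- Aldous' prediction process `Z_t^μ` (as a function of the path). -/
def predict (N : ℕ) (μ : Measure (Fin N → Y)) (t : ℕ) (h : t ≤ N) :
    (Fin N → Y) → Measure (Fin N → Y) :=
  fun x => condK (μ.map (fun y => (restr t h y, y))) (restr t h x)

/-- Aldous' map `E`, sending `μ` to the joint law of the path together with its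
prediction process. -/
def aldousMap (N : ℕ) (μ : Measure (Fin N → Y)) :
    Measure ((Fin N → Y) × (Fin (N + 1) → Measure (Fin N → Y))) :=
  μ.map (fun x =>
    (x, fun t : Fin (N + 1) => predict N μ t.1 (Nat.lt_succ_iff.mp t.2) x))

/-- Aldous' extended weak topology. -/
def aldousTopW (N : ℕ) : TopologicalSpace (Measure (Fin N → Y)) :=
  TopologicalSpace.induced (aldousMap N)
    (weakTop (prodTop Pi.topologicalSpace
      (@Pi.topologicalSpace (Fin (N + 1)) (fun _ => Measure (Fin N → Y))
        (fun _ => weakTop Pi.topologicalSpace))))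

/-- The extended `𝒲_p`-topology. -/
def aldousTopWp (p : ℝ) (d : Y → Y → ℝ≥0∞) (N : ℕ) :
    TopologicalSpace (Measure (Fin N → Y)) :=
  TopologicalSpace.induced (aldousMap N)
    (ballTop (Wp p (prodDist p (pathDist p d)
      (fun Z Z' : Fin (N + 1) → Measure (Fin N → Y) =>
        (∑ t, Wp p (pathDist p d) (Z t) (Z' t) ^ p) ^ (1 / p)))))

end PathStructures

/-! ### The lifted two-time-point space `𝒳₁ × 𝒫_p(𝒳₂)` -/

section Lifted

variable {A B : Type*} [MeasurableSpace A] [MeasurableSpace B]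

/-- The nested distance on `𝒳₁ × 𝒫_p(𝒳₂)`. -/
def liftDist (p : ℝ) (dA : A → A → ℝ≥0∞) (dB : B → B → ℝ≥0∞) :
    (A × Measure B) → (A × Measure B) → ℝ≥0∞ :=
  fun u v => (dA u.1 v.1 ^ p + Wp p dB u.2 v.2 ^ p) ^ (1 / p)

/-- `η` is a version of the measure-valued conditional expectation
`E_γ[X̂₂ | Y⃗]` (i.e. the barycenter of a regular conditional law of `X̂₂`
given `Y⃗ = (Y₁, Ŷ₂)`). -/
def IsCondBar (γ : Measure ((A × Measure B) × (A × Measure B)))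
    (η : (A × Measure B) × (A × Measure B) → Measure B) : Prop :=
  (∃ g : (A × Measure B) → Measure B, Measurable g ∧ ∀ z, η z = g z.2) ∧
  (∀ z, IsProbabilityMeasure (η z)) ∧
  ∀ S : Set (A × Measure B), MeasurableSet S → ∀ E : Set B, MeasurableSet E →
    ∫⁻ z in {z | z.2 ∈ S}, η z E ∂γ = ∫⁻ z in {z | z.2 ∈ S}, z.1.2 E ∂γ

/-- `AW̄_p`, the `p`-Wasserstein distance on `𝒫_p(𝒳₁ × 𝒫_p(𝒳₂))`. -/
def AWbar (p : ℝ) (dA : A → A → ℝ≥0∞) (dB : B → B → ℝ≥0∞)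
    (μ ν : Measure (A × Measure B)) : ℝ≥0∞ :=
  Wp p (liftDist p dA dB) μ ν

/-- `CW̄_p`, the lifted causal Wasserstein "distance". -/
def CWbar (p : ℝ) (dA : A → A → ℝ≥0∞) (dB : B → B → ℝ≥0∞)
    (μ ν : Measure (A × Measure B)) : ℝ≥0∞ :=
  ⨅ γ ∈ Cpl μ ν, ⨅ η ∈ {η | IsCondBar γ η},
    (∫⁻ z, (dA z.1.1 z.2.1 ^ p + Wp p dB (η z) z.2.2 ^ p) ∂γ) ^ (1 / p)

/-- `SCW̄_p`, the symmetrization of `CW̄_p`. -/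
def SCWbar (p : ℝ) (dA : A → A → ℝ≥0∞) (dB : B → B → ℝ≥0∞)
    (μ ν : Measure (A × Measure B)) : ℝ≥0∞ :=
  max (CWbar p dA dB μ ν) (CWbar p dA dB ν μ)

/-- Membership in `𝒫_p(𝒳₁ × 𝒫_p(𝒳₂))`: a probability measure, concentrated on
`𝒳₁ × 𝒫_p(𝒳₂)`, with finite `p`-th moment for the nested distance. -/
def MemPpLift (p : ℝ) (dA : A → A → ℝ≥0∞) (dB : B → B → ℝ≥0∞)
    (μ : Measure (A × Measure B)) : Prop :=
  IsProbabilityMeasure μ ∧ (∀ᵐ z ∂μ, MemPp p dB z.2) ∧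
    ∃ z₀ : A × Measure B, MemPp p dB z₀.2 ∧ ∫⁻ z, liftDist p dA dB z₀ z ^ p ∂μ ≠ ∞

/-- Two-time-point causality: given a coupling `π` of measures on products
`A₁ × B₁` and `A₂ × B₂`, the conditional law of `Y₁` given `X = (X₁, X₂)`
coincides with the conditional law of `Y₁` given `X₁`. -/
def Causal2 {A₁ B₁ A₂ B₂ : Type*} [MeasurableSpace A₁] [MeasurableSpace B₁]
    [MeasurableSpace A₂] [MeasurableSpace B₂]
    (π : Measure ((A₁ × B₁) × (A₂ × B₂))) : Prop :=
  ∀ S : Set A₂, MeasurableSet S →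
    (π[fun z => S.indicator (fun _ => (1 : ℝ)) z.2.1 |
        MeasurableSpace.comap Prod.fst inferInstance])
      =ᵐ[π]
    (π[fun z => S.indicator (fun _ => (1 : ℝ)) z.2.1 |
        MeasurableSpace.comap (fun z => z.1.1) inferInstance])

/-- The two-time-point causal Wasserstein "distance" on `𝒫_p(𝒳₁ × 𝒳₂)`. -/
def CW2 (p : ℝ) (dA : A → A → ℝ≥0∞) (dB : B → B → ℝ≥0∞)
    (μ ν : Measure (A × B)) : ℝ≥0∞ :=
  ⨅ π ∈ {π ∈ Cpl μ ν | Causal2 π},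
    (∫⁻ z, (dA z.1.1 z.2.1 ^ p + dB z.1.2 z.2.2 ^ p) ∂π) ^ (1 / p)

end Lifted

section Helpers

variable {Z : Type} [MetricSpace Z]

lemma pathDist_tri (p : ℝ) (hp : 1 ≤ p) {N : ℕ} (x y z : Fin N → Z) :
    pathDist p (edist : Z → Z → ℝ≥0∞) x z ≤ pathDist p edist x y + pathDist p edist y z := by
  unfold pathDist
  refine le_trans ?_ (ENNReal.Lp_add_le Finset.univ (fun t => edist (x t) (y t))
    (fun t => edist (y t) (z t)) hp)
  have : 0 ≤ p := by linarith
  have : 0 ≤ 1 / p := by positivity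
  gcongr with t
  exact edist_triangle _ _ _

lemma pathDist_symm (p : ℝ) {N : ℕ} (x y : Fin N → Z) :
    pathDist p (edist : Z → Z → ℝ≥0∞) x y = pathDist p edist y x := by
  unfold pathDist
  simp only [edist_comm]

lemma pathDist_min_le (p : ℝ) (hp : 1 ≤ p) {N : ℕ} (x y : Fin N → Z) :
    pathDist p (fun x y : Z => min 1 (edist x y)) x y ≤ pathDist p edist x y := by
  unfold pathDist
  have : 0 ≤ p := by linarith
  have : 0 ≤ 1 / p := by positivity
  gcongr with t
  exact min_le_right _ _

lemma pathDist_min_eq (p : ℝ) (hp : 1 ≤ p) {N : ℕ} (x y : Fin N → Z)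
    (h : pathDist p (fun x y : Z => min 1 (edist x y)) x y < 1) :
    pathDist p edist x y = pathDist p (fun x y : Z => min 1 (edist x y)) x y := by
  have hp0 : 0 < p := by linarith
  have hp1 : 0 < 1 / p := by positivity
  have key : ∀ t, min 1 (edist (x t) (y t)) = edist (x t) (y t) := by
    intro t
    by_contra hne
    have h1 : 1 ≤ edist (x t) (y t) := by
      by_contra hlt
      exact hne (min_eq_right (le_of_lt (not_le.mp hlt)))
    have h2 : (1 : ℝ≥0∞) ≤ ∑ s, min 1 (edist (x s) (y s)) ^ p := by
      calc (1 : ℝ≥0∞) = min 1 (edist (x t) (y t)) ^ p := by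
            rw [min_eq_left h1, ENNReal.one_rpow]
        _ ≤ _ := Finset.single_le_sum (f := fun s => min 1 (edist (x s) (y s)) ^ p)
            (fun _ _ => zero_le) (Finset.mem_univ t)
    have h3 : (1 : ℝ≥0∞) ≤ pathDist p (fun x y : Z => min 1 (edist x y)) x y := by
      unfold pathDist
      exact ENNReal.one_le_rpow h2 hp1
    exact absurd h (not_lt.mpr h3)
  unfold pathDist
  simp only [key]

variable [SecondCountableTopology Z] [MeasurableSpace Z] [BorelSpace Z]

lemma pathDist_meas (p : ℝ) {N : ℕ} :
    Measurable (fun z : (Fin N → Z) × (Fin N → Z) => pathDist p edist z.1 z.2) := by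
  unfold pathDist
  refine Measurable.pow_const (Finset.measurable_sum _ fun t _ => Measurable.pow_const ?_ _) _
  exact Measurable.edist ((measurable_pi_apply t).comp measurable_fst)
    ((measurable_pi_apply t).comp measurable_snd)

lemma pathDist_min_meas (p : ℝ) {N : ℕ} :
    Measurable (fun z : (Fin N → Z) × (Fin N → Z) =>
      pathDist p (fun x y : Z => min 1 (edist x y)) z.1 z.2) := by
  unfold pathDist
  refine Measurable.pow_const (Finset.measurable_sum _ fun t _ => Measurable.pow_const ?_ _) _
  exact measurable_const.min (Measurable.edist ((measurable_pi_apply t).comp measurable_fst)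
    ((measurable_pi_apply t).comp measurable_snd))

lemma pathDist_meas_left (p : ℝ) {N : ℕ} (x₀ : Fin N → Z) :
    Measurable (fun x : Fin N → Z => pathDist p edist x₀ x) :=
  (pathDist_meas p).comp (measurable_const.prodMk measurable_id)

/-- Minkowski on a coupling, direction 1. -/
lemma mink1 (p : ℝ) (hp : 1 ≤ p) {N : ℕ} (x₀ : Fin N → Z)
    (π : Measure ((Fin N → Z) × (Fin N → Z))) :
    (∫⁻ z, pathDist p edist x₀ z.2 ^ p ∂π) ^ (1 / p) ≤
      (∫⁻ z, pathDist p edist x₀ z.1 ^ p ∂π) ^ (1 / p) +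
      (∫⁻ z, pathDist p edist z.1 z.2 ^ p ∂π) ^ (1 / p) := by
  have h0 : 0 ≤ p := by linarith
  have h1 : 0 ≤ 1 / p := by positivity
  refine le_trans ?_ (ENNReal.lintegral_Lp_add_le
    ((pathDist_meas_left p x₀).comp measurable_fst).aemeasurable
    (pathDist_meas p).aemeasurable hp)
  gcongr with z
  exact pathDist_tri p hp _ _ _

/-- Minkowski on a coupling, direction 2. -/
lemma mink2 (p : ℝ) (hp : 1 ≤ p) {N : ℕ} (x₀ : Fin N → Z)
    (π : Measure ((Fin N → Z) × (Fin N → Z))) :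
    (∫⁻ z, pathDist p edist x₀ z.1 ^ p ∂π) ^ (1 / p) ≤
      (∫⁻ z, pathDist p edist x₀ z.2 ^ p ∂π) ^ (1 / p) +
      (∫⁻ z, pathDist p edist z.1 z.2 ^ p ∂π) ^ (1 / p) := by
  have h0 : 0 ≤ p := by linarith
  have h1 : 0 ≤ 1 / p := by positivity
  refine le_trans ?_ (ENNReal.lintegral_Lp_add_le
    ((pathDist_meas_left p x₀).comp measurable_snd).aemeasurable
    (pathDist_meas p).aemeasurable hp)
  gcongr with z
  refine (pathDist_tri p hp x₀ z.2 z.1).trans ?_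
  rw [pathDist_symm p z.2 z.1]
  rfl

lemma lint_fst (p : ℝ) {N : ℕ} (x₀ : Fin N → Z)
    {π : Measure ((Fin N → Z) × (Fin N → Z))} {μ : Measure (Fin N → Z)}
    (h : π.map Prod.fst = μ) :
    ∫⁻ x, pathDist p edist x₀ x ^ p ∂μ = ∫⁻ z, pathDist p edist x₀ z.1 ^ p ∂π := by
  rw [← h, lintegral_map ((pathDist_meas_left p x₀).pow_const p) measurable_fst]

lemma lint_snd (p : ℝ) {N : ℕ} (x₀ : Fin N → Z)
    {π : Measure ((Fin N → Z) × (Fin N → Z))} {μ : Measure (Fin N → Z)}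
    (h : π.map Prod.snd = μ) :
    ∫⁻ x, pathDist p edist x₀ x ^ p ∂μ = ∫⁻ z, pathDist p edist x₀ z.2 ^ p ∂π := by
  rw [← h, lintegral_map ((pathDist_meas_left p x₀).pow_const p) measurable_snd]

/-- Uniform absolute continuity of a fixed marginal. -/
lemma tendsto_tail {Ω E : Type*} [MeasurableSpace Ω] [MeasurableSpace E]
    (μ : Measure E) (g : E → ℝ≥0∞) (hg : Measurable g) (hfin : ∫⁻ x, g x ∂μ ≠ ∞)
    (π : ℕ → Measure Ω) (Y : Ω → E) (hY : Measurable Y) (hπ : ∀ n, (π n).map Y = μ)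
    (B : Set Ω) (hB : Tendsto (fun n => π n B) atTop (𝓝 0)) :
    Tendsto (fun n => ∫⁻ z in B, g (Y z) ∂(π n)) atTop (𝓝 0) := by
  have hk : Tendsto (fun k : ℕ => ∫⁻ x, (g x - (k : ℝ≥0∞)) ∂μ) atTop (𝓝 0) := by
    have := tendsto_lintegral_of_dominated_convergence (μ := μ)
      (F := fun (k : ℕ) x => g x - (k : ℝ≥0∞)) (f := fun _ => 0) g
      (fun k => hg.sub measurable_const)
      (fun k => Eventually.of_forall fun x => tsub_le_self) hfin ?_
    · simpa using this
    · filter_upwards [ae_lt_top hg hfin] with x hx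
      obtain ⟨m, hm⟩ := ENNReal.exists_nat_gt hx.ne
      refine tendsto_const_nhds.congr' ?_
      filter_upwards [eventually_ge_atTop m] with k hk
      symm
      exact tsub_eq_zero_of_le (hm.le.trans (by exact_mod_cast hk))
  rw [ENNReal.tendsto_nhds_zero]
  intro ε hε
  have hε2 : 0 < ε / 2 := ENNReal.half_pos hε.ne'
  obtain ⟨k, hk⟩ := ((ENNReal.tendsto_nhds_zero.mp hk) (ε / 2) hε2).exists
  have hkB : Tendsto (fun n => (k : ℝ≥0∞) * π n B) atTop (𝓝 0) := by
    simpa using ENNReal.Tendsto.const_mul hB (Or.inr (ENNReal.natCast_ne_top k))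
  filter_upwards [(ENNReal.tendsto_nhds_zero.mp hkB) (ε / 2) hε2] with n hn
  calc ∫⁻ z in B, g (Y z) ∂(π n)
      ≤ ∫⁻ z in B, ((g (Y z) - (k : ℝ≥0∞)) + k) ∂(π n) :=
        lintegral_mono fun z => le_tsub_add
    _ = ∫⁻ z in B, (g (Y z) - (k : ℝ≥0∞)) ∂(π n) + k * π n B := by
        rw [lintegral_add_right _ measurable_const, setLIntegral_const]
    _ ≤ ∫⁻ z, (g (Y z) - (k : ℝ≥0∞)) ∂(π n) + k * π n B := by
        gcongr
        exact Measure.restrict_le_self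
    _ = ∫⁻ x, (g x - (k : ℝ≥0∞)) ∂μ + k * π n B := by
        rw [← hπ n, lintegral_map (f := fun x => g x - (k : ℝ≥0∞)) (hg.sub measurable_const) hY]
    _ ≤ ε / 2 + ε / 2 := by gcongr
    _ = ε := ENNReal.add_halves ε

/-- Core of the backward direction. -/
lemma core (p : ℝ) (hp : 1 ≤ p) {N : ℕ} (x₀ : Fin N → Z)
    (μ : Measure (Fin N → Z)) (μs : ℕ → Measure (Fin N → Z))
    (π : ℕ → Measure ((Fin N → Z) × (Fin N → Z)))
    (h1 : ∀ n, (π n).map Prod.fst = μs n) (h2 : ∀ n, (π n).map Prod.snd = μ)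
    (hM : ∫⁻ x, pathDist p edist x₀ x ^ p ∂μ ≠ ∞)
    (hm : Tendsto (fun n => ∫⁻ x, pathDist p edist x₀ x ^ p ∂(μs n)) atTop
            (𝓝 (∫⁻ x, pathDist p edist x₀ x ^ p ∂μ)))
    (he : Tendsto (fun n => ∫⁻ z, pathDist p (fun x y : Z => min 1 (edist x y)) z.1 z.2 ^ p ∂(π n))
      atTop (𝓝 0)) :
    Tendsto (fun n => ∫⁻ z, pathDist p edist z.1 z.2 ^ p ∂(π n)) atTop (𝓝 0) := by
  have hp0 : 0 < p := by linarith
  have hq0 : 0 < 1 / p := by positivity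
  set A : Set ((Fin N → Z) × (Fin N → Z)) :=
    {z | pathDist p (fun x y : Z => min 1 (edist x y)) z.1 z.2 < 1} with hAdef
  have hA : MeasurableSet A := measurableSet_lt (pathDist_min_meas p) measurable_const
  set M := ∫⁻ x, pathDist p edist x₀ x ^ p ∂μ
  set m := fun n => ∫⁻ x, pathDist p edist x₀ x ^ p ∂(μs n) with hmdef
  set e := fun n => ∫⁻ z, pathDist p (fun x y : Z => min 1 (edist x y)) z.1 z.2 ^ p ∂(π n)
    with hedef
  set a := fun n => ∫⁻ z in A, pathDist p edist x₀ z.2 ^ p ∂(π n) with hadef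
  set b := fun n => ∫⁻ z in A, pathDist p edist x₀ z.1 ^ p ∂(π n) with hbdef
  set c := fun n => ∫⁻ z in Aᶜ, pathDist p edist x₀ z.1 ^ p ∂(π n) with hcdef
  set d := fun n => ∫⁻ z in Aᶜ, pathDist p edist x₀ z.2 ^ p ∂(π n) with hddef
  have had : ∀ n, a n + d n = M := fun n => by
    rw [hadef, hddef]
    simp only
    rw [lintegral_add_compl _ hA, ← lint_snd p x₀ (h2 n)]
  have hbc : ∀ n, b n + c n = m n := fun n => by
    rw [hbdef, hcdef, hmdef]
    simp only
    rw [lintegral_add_compl _ hA, ← lint_fst p x₀ (h1 n)]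
  have hAc : Tendsto (fun n => π n Aᶜ) atTop (𝓝 0) := by
    refine tendsto_of_tendsto_of_tendsto_of_le_of_le tendsto_const_nhds he
      (fun _ => zero_le) fun n => ?_
    calc π n Aᶜ = ∫⁻ z in Aᶜ, 1 ∂(π n) := by simp
      _ ≤ ∫⁻ z in Aᶜ, pathDist p (fun x y : Z => min 1 (edist x y)) z.1 z.2 ^ p ∂(π n) := by
          refine setLIntegral_mono' hA.compl fun z hz => ?_
          exact ENNReal.one_le_rpow (not_lt.mp hz) hp0
      _ ≤ e n := setLIntegral_le_lintegral _ _
  have hd : Tendsto d atTop (𝓝 0) :=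
    tendsto_tail μ _ ((pathDist_meas_left p x₀).pow_const p) hM π Prod.snd measurable_snd h2 _ hAc
  have ha : Tendsto a atTop (𝓝 M) := by
    have h : Tendsto (fun n => M - d n) atTop (𝓝 (M - 0)) :=
      ENNReal.Tendsto.sub tendsto_const_nhds hd (Or.inl hM)
    rw [tsub_zero] at h
    refine h.congr fun n => ?_
    have hdn : d n ≠ ∞ := fun h => hM (by rw [← had n, h, add_top])
    rw [← had n, ENNReal.add_sub_cancel_right hdn]
  have hDA : ∀ n, ∫⁻ z in A, pathDist p edist z.1 z.2 ^ p ∂(π n) ≤ e n := fun n => by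
    refine le_trans (setLIntegral_mono' hA fun z hz => ?_) (setLIntegral_le_lintegral A _)
    rw [pathDist_min_eq p hp z.1 z.2 hz]
  have hb : Tendsto b atTop (𝓝 M) := by
    have hlow : Tendsto (fun n => a n ^ (1 / p) - e n ^ (1 / p)) atTop (𝓝 (M ^ (1 / p))) := by
      have h := ENNReal.Tendsto.sub (ha.ennrpow_const (1 / p)) (he.ennrpow_const (1 / p))
        (Or.inl (ENNReal.rpow_ne_top_of_nonneg hq0.le hM))
      rwa [ENNReal.zero_rpow_of_pos hq0, tsub_zero] at h
    have hbq : Tendsto (fun n => b n ^ (1 / p)) atTop (𝓝 (M ^ (1 / p))) := by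
      refine tendsto_of_tendsto_of_tendsto_of_le_of_le hlow (hm.ennrpow_const (1 / p))
        (fun n => ?_) (fun n => ?_)
      · refine tsub_le_iff_right.mpr ((mink1 p hp x₀ ((π n).restrict A)).trans ?_)
        gcongr
        exact hDA n
      · show b n ^ (1 / p) ≤ m n ^ (1 / p)
        rw [← hbc n]
        gcongr
        exact le_self_add
    have h := hbq.ennrpow_const p
    simpa only [← ENNReal.rpow_mul, one_div_mul_cancel hp0.ne', ENNReal.rpow_one] using h
  have hc : Tendsto c atTop (𝓝 0) := by
    have h := ENNReal.Tendsto.sub hm hb (Or.inl hM)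
    rw [tsub_self] at h
    refine h.congr' ?_
    filter_upwards [hb.eventually_lt_const (lt_top_iff_ne_top.mpr hM)] with n hn
    show m n - b n = c n
    rw [← hbc n, ENNReal.add_sub_cancel_left hn.ne]
  have hup : Tendsto (fun n => e n + (2 : ℝ≥0∞) ^ (p - 1) * (c n + d n)) atTop (𝓝 0) := by
    have h := he.add (ENNReal.Tendsto.const_mul (hc.add hd)
      (a := (2 : ℝ≥0∞) ^ (p - 1)) (Or.inr (ENNReal.rpow_ne_top_of_nonneg (by linarith) (by simp))))
    simpa using h
  refine tendsto_of_tendsto_of_tendsto_of_le_of_le tendsto_const_nhds hup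
    (fun _ => zero_le) fun n => ?_
  show ∫⁻ z, pathDist p edist z.1 z.2 ^ p ∂(π n) ≤ _
  rw [← lintegral_add_compl _ hA]
  refine add_le_add (hDA n) ?_
  have hcd : c n + d n = ∫⁻ z in Aᶜ, (pathDist p edist x₀ z.1 ^ p +
      pathDist p edist x₀ z.2 ^ p) ∂(π n) := by
    rw [lintegral_add_left]
    exact ((pathDist_meas_left p x₀).comp measurable_fst).pow_const p
  rw [hcd, ← lintegral_const_mul' _ _ (ENNReal.rpow_ne_top_of_nonneg (by linarith) (by simp))]
  refine lintegral_mono fun z => ?_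
  refine le_trans ?_ (ENNReal.rpow_add_le_mul_rpow_add_rpow _ _ hp)
  refine ENNReal.rpow_le_rpow ?_ hp0.le
  refine (pathDist_tri p hp z.1 x₀ z.2).trans ?_
  rw [pathDist_symm p z.1 x₀]

end Helpers

/-- **Lemma 1.3.**  `μ_n → μ` in `𝒜𝒲_p` (built from `ρ`) iff `μ_n → μ` in the
adapted distance built from the bounded metric `min(1, ρ)` and the `p`-th
moments converge. -/
theorem AW_convergence_iff_bounded_and_moments
    {X : Type} [MetricSpace X] [CompleteSpace X] [SecondCountableTopology X]
    [MeasurableSpace X] [BorelSpace X] [Nonempty X]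
    (p : ℝ) (hp : 1 ≤ p) (N : ℕ) (hN : 0 < N)
    (μ : Measure (Fin N → X)) (μs : ℕ → Measure (Fin N → X))
    (hμ : MemPp p (pathDist p (edist : X → X → ℝ≥0∞)) μ)
    (hμs : ∀ n, MemPp p (pathDist p (edist : X → X → ℝ≥0∞)) (μs n)) :
    let d : X → X → ℝ≥0∞ := edist
    let dB : X → X → ℝ≥0∞ := fun x y => min 1 (edist x y)
    (Tendsto (fun n => AW p d (μs n) μ) atTop (𝓝 0) ↔
      (Tendsto (fun n => AW p dB (μs n) μ) atTop (𝓝 0) ∧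
        ∀ x₀ : Fin N → X,
          Tendsto (fun n => ∫⁻ x, pathDist p d x₀ x ^ p ∂(μs n)) atTop
            (𝓝 (∫⁻ x, pathDist p d x₀ x ^ p ∂μ)))) := by
  intro d dB
  have hp0 : 0 < p := by linarith
  have hq0 : 0 < 1 / p := by positivity
  constructor
  · intro h
    refine ⟨?_, fun x₀ => ?_⟩
    · refine tendsto_of_tendsto_of_tendsto_of_le_of_le tendsto_const_nhds h
        (fun _ => zero_le) fun n => ?_
      refine iInf₂_mono fun π _ => ?_
      gcongr with z
      exact pathDist_min_le p hp _ _
    · have h1 : ∀ n, (∫⁻ x, pathDist p d x₀ x ^ p ∂μ) ^ (1 / p) - AW p d (μs n) μ ≤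
          (∫⁻ x, pathDist p d x₀ x ^ p ∂(μs n)) ^ (1 / p) := fun n => by
        rw [tsub_le_iff_left, ← tsub_le_iff_right]
        refine le_iInf₂ fun π hπ => ?_
        rw [tsub_le_iff_left]
        have := mink1 p hp x₀ π
        rwa [← lint_fst p x₀ hπ.1.1, ← lint_snd p x₀ hπ.1.2] at this
      have h2 : ∀ n, (∫⁻ x, pathDist p d x₀ x ^ p ∂(μs n)) ^ (1 / p) ≤
          (∫⁻ x, pathDist p d x₀ x ^ p ∂μ) ^ (1 / p) + AW p d (μs n) μ := fun n => by
        rw [← tsub_le_iff_left]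
        refine le_iInf₂ fun π hπ => ?_
        rw [tsub_le_iff_left]
        have := mink2 p hp x₀ π
        rwa [← lint_fst p x₀ hπ.1.1, ← lint_snd p x₀ hπ.1.2] at this
      have hl := ENNReal.Tendsto.sub (tendsto_const_nhds
        (x := (∫⁻ x, pathDist p d x₀ x ^ p ∂μ) ^ (1 / p))) h (Or.inr ENNReal.zero_ne_top)
      have hu := (tendsto_const_nhds
        (x := (∫⁻ x, pathDist p d x₀ x ^ p ∂μ) ^ (1 / p))).add h
      rw [tsub_zero] at hl
      rw [add_zero] at hu
      have hq := (tendsto_of_tendsto_of_tendsto_of_le_of_le hl hu h1 h2).ennrpow_const p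
      simpa only [← ENNReal.rpow_mul, one_div_mul_cancel hp0.ne', ENNReal.rpow_one] using hq
  · rintro ⟨h, hmom⟩
    obtain ⟨-, x₀, hx₀⟩ := hμ
    obtain ⟨n₀, hn₀⟩ := eventually_atTop.mp (h.eventually_lt_const ENNReal.zero_lt_top)
    have hch : ∀ n, ∃ π ∈ {π ∈ Cpl (μs (n + n₀)) μ | Bicausal π},
        (∫⁻ z, pathDist p dB z.1 z.2 ^ p ∂π) ^ (1 / p) <
          AW p dB (μs (n + n₀)) μ + ((n : ℝ≥0∞) + 1)⁻¹ := by
      intro n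
      have hlt : AW p dB (μs (n + n₀)) μ < AW p dB (μs (n + n₀)) μ + ((n : ℝ≥0∞) + 1)⁻¹ :=
        ENNReal.lt_add_right (hn₀ _ (Nat.le_add_left _ _)).ne
          (ENNReal.inv_ne_zero.mpr (by finiteness))
      conv_lhs at hlt => unfold AW
      obtain ⟨π, hπ⟩ := iInf_lt_iff.mp hlt
      obtain ⟨hm, hπ⟩ := iInf_lt_iff.mp hπ
      exact ⟨π, hm, hπ⟩
    choose π hπm hπ using hch
    have hinv : Tendsto (fun n : ℕ => ((n : ℝ≥0∞) + 1)⁻¹) atTop (𝓝 0) := by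
      have := (tendsto_add_atTop_iff_nat 1).mpr ENNReal.tendsto_inv_nat_nhds_zero
      simpa using this
    have hsh := ((tendsto_add_atTop_iff_nat n₀).mpr h).add hinv
    rw [add_zero] at hsh
    have he := (tendsto_of_tendsto_of_tendsto_of_le_of_le tendsto_const_nhds hsh
      (fun _ => zero_le) fun n => (hπ n).le).ennrpow_const p
    simp only [← ENNReal.rpow_mul, one_div_mul_cancel hp0.ne', ENNReal.rpow_one,
      ENNReal.zero_rpow_of_pos hp0] at he
    have hfin := (core p hp x₀ μ (fun n => μs (n + n₀)) π (fun n => (hπm n).1.1)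
      (fun n => (hπm n).1.2) hx₀ ((tendsto_add_atTop_iff_nat n₀).mpr (hmom x₀))
      he).ennrpow_const (1 / p)
    rw [ENNReal.zero_rpow_of_pos hq0] at hfin
    rw [← tendsto_add_atTop_iff_nat n₀]
    exact tendsto_of_tendsto_of_tendsto_of_le_of_le tendsto_const_nhds hfin
      (fun _ => zero_le) fun n => iInf₂_le (π n) (hπm n)

end AWPaper
end
end

section
/- Assume ρ is bounded. A subset A ⊆ 𝒫(X̄) is relatively compact with respect to the usual weak topology if and only if its image 𝒩[A] ⊆ 𝒫(𝒳_1) under the nested-distribution map 𝒩 is relatively compact with respect to the nested Wasserstein metric W_{D_1,p}. -/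
open MeasureTheory ProbabilityTheory ENNReal Filter Topology

noncomputable section

namespace AWPaper

/-! ### Generic constructions -/

variable {α β : Type*}

/-! ### Path spaces -/

variable {X : Type*} [MeasurableSpace X]

/-! ### Topology and measurability of spaces of probability measures -/

lemma exists_inducing_cube (Y : Type*) [TopologicalSpace Y] [TopologicalSpace.MetrizableSpace Y]
    [SecondCountableTopology Y] [Nonempty Y] :
    ∃ f : Y → (ℕ → Set.Icc (0:ℝ) 1), IsInducing f := by
  letI := TopologicalSpace.metrizableSpaceMetric Y
  let s := TopologicalSpace.denseSeq Y
  let f : Y → (ℕ → Set.Icc (0:ℝ) 1) := fun y n =>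
    ⟨min (dist y (s n)) 1, le_min dist_nonneg zero_le_one, min_le_right _ _⟩
  have hf : Continuous f := by
    refine continuous_pi fun n => Continuous.subtype_mk (by fun_prop) _
  refine ⟨f, isInducing_iff_nhds.2 fun y => le_antisymm (hf.tendsto y).le_comap ?_⟩
  refine (Metric.nhds_basis_ball.ge_iff).2 fun ε hε => ?_
  set δ := min (ε / 3) (1 / 3) with hδ
  have hδ0 : 0 < δ := by positivity
  obtain ⟨n, hn⟩ : ∃ n, dist y (s n) < δ :=
    (TopologicalSpace.denseRange_denseSeq Y).exists_dist_lt y hδ0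
  have h1 : δ ≤ ε / 3 := min_le_left _ _
  have h2 : δ ≤ 1 / 3 := min_le_right _ _
  refine mem_comap.2 ⟨{g | |(g n : ℝ) - (f y n : ℝ)| < δ}, ?_, ?_⟩
  · have : Continuous fun g : (ℕ → Set.Icc (0:ℝ) 1) => |(g n : ℝ) - (f y n : ℝ)| := by fun_prop
    exact (this.isOpen_preimage _ isOpen_Iio).mem_nhds (by simpa using hδ0)
  · intro z hz
    have hz' : |min (dist z (s n)) 1 - min (dist y (s n)) 1| < δ := hz
    rw [min_eq_left (by linarith : dist y (s n) ≤ 1)] at hz'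
    have h3 := (abs_lt.1 hz').2
    have h4 : dist z (s n) < 2 * δ := by
      rcases min_lt_iff.1 (by linarith : min (dist z (s n)) 1 < 2 * δ) with h | h
      · exact h
      · linarith
    have := dist_triangle_right z y (s n)
    simp only [Metric.mem_ball]
    linarith

section PM
variable {Y : Type*} [TopologicalSpace Y] [TopologicalSpace.MetrizableSpace Y]
    [SecondCountableTopology Y] [MeasurableSpace Y] [BorelSpace Y]

lemma isInducing_pm_map {H : Type*} [TopologicalSpace H] [TopologicalSpace.MetrizableSpace H]
    [SecondCountableTopology H] [MeasurableSpace H] [BorelSpace H] {f : Y → H} (hf : IsInducing f) :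
    IsInducing (fun μ : ProbabilityMeasure Y => μ.map hf.continuous.measurable.aemeasurable) := by
  refine isInducing_iff_nhds.2 fun μ => le_antisymm
    ((ProbabilityMeasure.continuous_map hf.continuous).tendsto μ).le_comap ?_
  have : Tendsto (fun ν : ProbabilityMeasure Y => ν)
      (comap (fun μ : ProbabilityMeasure Y => μ.map hf.continuous.measurable.aemeasurable)
        (𝓝 (μ.map hf.continuous.measurable.aemeasurable))) (𝓝 μ) := by
    refine tendsto_of_forall_isOpen_le_liminf' fun G hG => ?_
    obtain ⟨G', hG', rfl⟩ := hf.isOpen_iff.1 hG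
    have := ProbabilityMeasure.le_liminf_measure_open_of_tendsto
      (tendsto_comap (f := (fun μ : ProbabilityMeasure Y =>
        μ.map hf.continuous.measurable.aemeasurable))
        (x := (𝓝 (μ.map hf.continuous.measurable.aemeasurable)))) hG'
    simpa [Measure.map_apply hf.continuous.measurable hG'.measurableSet] using this
  exact this

instance pm_secondCountable : SecondCountableTopology (ProbabilityMeasure Y) := by
  rcases isEmpty_or_nonempty Y with h | h
  · have : IsEmpty (ProbabilityMeasure Y) := ⟨fun μ => by
      have := μ.2.measure_univ
      simp [Set.univ_eq_empty_iff.2 h] at this⟩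
    infer_instance
  obtain ⟨f, hf⟩ := exists_inducing_cube Y
  have h1 := isInducing_pm_map hf
  have : SecondCountableTopology (ProbabilityMeasure (ℕ → Set.Icc (0:ℝ) 1)) := by
    letI := TopologicalSpace.metrizableSpaceMetric (ProbabilityMeasure (ℕ → Set.Icc (0:ℝ) 1))
    infer_instance
  exact h1.secondCountableTopology

instance pm_borel : BorelSpace (ProbabilityMeasure Y) := by
  constructor
  apply le_antisymm
  · -- Giry ≤ Borel
    have : @Measurable _ _ (borel (ProbabilityMeasure Y)) _
        (fun μ : ProbabilityMeasure Y => (μ : Measure Y)) := by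
      letI : MeasurableSpace (ProbabilityMeasure Y) := borel _
      haveI : BorelSpace (ProbabilityMeasure Y) := ⟨rfl⟩
      refine Measurable.measure_of_isPiSystem_of_isProbabilityMeasure
        (S := {s | IsOpen s}) (BorelSpace.measurable_eq) isPiSystem_isOpen fun G hG => ?_
      apply LowerSemicontinuous.measurable
      rw [lowerSemicontinuous_iff_le_liminf]
      intro μ
      exact ProbabilityMeasure.le_liminf_measure_open_of_tendsto tendsto_id hG
    exact this.comap_le
  · -- Borel ≤ Giry
    have hsub : (inferInstance : TopologicalSpace (ProbabilityMeasure Y)) =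
        TopologicalSpace.generateFrom {s | ∃ (f : BoundedContinuousFunction Y ℝ) (U : Set ℝ),
          IsOpen U ∧ s = (fun μ : ProbabilityMeasure Y => ∫ x, f x ∂(μ : Measure Y)) ⁻¹' U} := by
      apply le_antisymm
      · refine le_generateFrom ?_
        rintro s ⟨f, U, hU, rfl⟩
        exact hU.preimage (ProbabilityMeasure.continuous_integral_boundedContinuousFunction f)
      · refine TopologicalSpace.le_def.2 fun V hV => ?_
        refine (@isOpen_iff_mem_nhds _ (TopologicalSpace.generateFrom _) _).2 fun μ hμV => ?_
        have ht : Tendsto (fun ν : ProbabilityMeasure Y => ν)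
            (@nhds _ (TopologicalSpace.generateFrom {s |
              ∃ (f : BoundedContinuousFunction Y ℝ) (U : Set ℝ),
              IsOpen U ∧ s = (fun μ : ProbabilityMeasure Y => ∫ x, f x ∂(μ : Measure Y)) ⁻¹' U}) μ)
            (𝓝 μ) := by
          rw [ProbabilityMeasure.tendsto_iff_forall_integral_tendsto]
          intro f
          refine tendsto_nhds.2 fun U hU hμ => ?_
          let := TopologicalSpace.generateFrom {s |
              ∃ (f : BoundedContinuousFunction Y ℝ) (U : Set ℝ),
              IsOpen U ∧ s = (fun μ : ProbabilityMeasure Y => ∫ x, f x ∂(μ : Measure Y)) ⁻¹' U}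
          refine @IsOpen.mem_nhds _ (TopologicalSpace.generateFrom _)  μ ((fun μ : ProbabilityMeasure Y =>
            ∫ x, f x ∂(μ : Measure Y)) ⁻¹' U) ?_ hμ
          exact TopologicalSpace.isOpen_generateFrom_of_mem ⟨f, U, hU, rfl⟩
        exact ht (hV.mem_nhds hμV)
    rw [borel_eq_generateFrom_of_subbasis hsub]
    refine MeasurableSpace.generateFrom_le ?_
    rintro s ⟨f, U, hU, rfl⟩
    refine hU.measurableSet.preimage ?_
    have : StronglyMeasurable (fun μ : ProbabilityMeasure Y => ∫ x, f x ∂(μ : Measure Y)) := by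
      let κ : Kernel (ProbabilityMeasure Y) Y := ⟨fun μ => (μ : Measure Y), measurable_subtype_coe⟩
      exact f.continuous.stronglyMeasurable.integral_kernel (κ := κ)
    exact this.measurable

lemma measurableEmbedding_pm_map {Z : Type*} [MeasurableSpace Z] {Y : Type*} [MeasurableSpace Y]
    {f : Y → Z} (hf : MeasurableEmbedding f) :
    MeasurableEmbedding (fun μ : ProbabilityMeasure Y => (μ : Measure Y).map f) ∧
    Set.range (fun μ : ProbabilityMeasure Y => (μ : Measure Y).map f) =
      {m | IsProbabilityMeasure m ∧ m (Set.range f)ᶜ = 0} := by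
  classical
  have hmeas : Measurable (fun μ : ProbabilityMeasure Y => (μ : Measure Y).map f) :=
    (Measure.measurable_map f hf.measurable).comp measurable_subtype_coe
  have hrange : Set.range (fun μ : ProbabilityMeasure Y => (μ : Measure Y).map f) =
      {m | IsProbabilityMeasure m ∧ m (Set.range f)ᶜ = 0} := by
    ext m
    constructor
    · rintro ⟨μ, rfl⟩
      refine ⟨Measure.isProbabilityMeasure_map hf.measurable.aemeasurable, ?_⟩
      rw [hf.map_apply]; simp
    · rintro ⟨hm, h0⟩
      have h1 : m.restrict (Set.range f) = m :=
        Measure.restrict_eq_self_of_ae_mem (mem_ae_iff.2 h0)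
      have hc : (m.comap f).map f = m := by rw [hf.map_comap, h1]
      refine ⟨⟨m.comap f, ⟨?_⟩⟩, hc⟩
      have := hm.measure_univ
      rw [← hc, hf.map_apply] at this
      simpa using this
  have hrm : MeasurableSet (Set.range (fun μ : ProbabilityMeasure Y => (μ : Measure Y).map f)) := by
    rw [hrange]
    exact ProbabilityMeasure.measurableSet_isProbabilityMeasure.inter
      (Measure.measurable_coe hf.measurableSet_range.compl (measurableSet_singleton 0))
  refine ⟨⟨?_, hmeas, ?_⟩, hrange⟩
  · intro μ ν h
    have h' : (μ : Measure Y).map f = (ν : Measure Y).map f := h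
    apply Subtype.ext
    have := congrArg (Measure.comap f) h'
    rwa [hf.comap_map, hf.comap_map] at this
  · intro s hs
    obtain ⟨t, ht, hts⟩ := hs
    have hts' : ∀ μ : ProbabilityMeasure Y, μ ∈ s ↔ (μ : Measure Y) ∈ t := by
      intro μ; rw [← hts]; rfl
    have hg : Measurable (fun m : Measure Z => m.comap f) := by
      refine Measure.measurable_of_measurable_coe _ fun s hs => ?_
      simp_rw [hf.comap_apply]
      exact Measure.measurable_coe (hf.measurableSet_image' hs)
    have : (fun μ : ProbabilityMeasure Y => (μ : Measure Y).map f) '' s =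
        Set.range (fun μ : ProbabilityMeasure Y => (μ : Measure Y).map f) ∩
          (fun m : Measure Z => m.comap f) ⁻¹' t := by
      ext m
      constructor
      · rintro ⟨μ, hμ, rfl⟩
        refine ⟨⟨μ, rfl⟩, ?_⟩
        simpa [hf.comap_map, hts'] using hμ
      · rintro ⟨⟨μ, rfl⟩, h⟩
        refine ⟨μ, ?_, rfl⟩
        simpa [hf.comap_map, hts'] using h
    rw [this]
    exact hrm.inter (hg ht)

lemma standardBorel_of_embedding {α β : Type*} [MeasurableSpace α] [MeasurableSpace β]
    [StandardBorelSpace β] {f : α → β} (hf : MeasurableEmbedding f) : StandardBorelSpace α := by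
  have : StandardBorelSpace (Set.range f) := hf.measurableSet_range.standardBorel
  let e := hf.equivRange
  let := upgradeStandardBorel (Set.range f)
  let t : TopologicalSpace α := TopologicalSpace.induced e inferInstance
  have hb : BorelSpace α := by
    constructor
    have h1 : borel α = MeasurableSpace.comap e (borel (Set.range f)) :=
      borel_comap
    rw [h1, ← BorelSpace.measurable_eq (α := Set.range f)]
    exact (e.measurableEmbedding.comap_eq).symm
  have hp : PolishSpace α := by
    have he : IsClosedEmbedding e := by
      refine ⟨⟨⟨rfl⟩, e.injective⟩, ?_⟩
      rw [e.surjective.range_eq]; exact isClosed_univ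
    exact he.polishSpace
  exact ⟨t, hb, hp⟩

end PM

instance pm_standardBorel {Y : Type*} [MeasurableSpace Y] [StandardBorelSpace Y] :
    StandardBorelSpace (ProbabilityMeasure Y) := by
  obtain ⟨f, hf⟩ := exists_measurableEmbedding_real Y
  let g : ℝ → Set.Icc (0:ℝ) 1 := fun x => ⟨Real.sigmoid x, Real.sigmoid_nonneg x, Real.sigmoid_le_one x⟩
  have hg : MeasurableEmbedding g := by
    apply Measurable.measurableEmbedding
    · exact (Continuous.subtype_mk (by fun_prop) _).measurable
    · intro a b h
      exact Real.sigmoid_strictMono.injective (congrArg Subtype.val h)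
  have hgf := hg.comp hf
  have h1 := (measurableEmbedding_pm_map hgf).1
  have h2 : MeasurableEmbedding (fun μ : ProbabilityMeasure Y =>
      (μ.map (f := g ∘ f) hgf.measurable.aemeasurable : ProbabilityMeasure (Set.Icc (0:ℝ) 1))) := by
    refine ⟨fun a b h => h1.injective (congrArg Subtype.val h), ?_, fun s hs => ?_⟩
    · exact h1.measurable.subtype_mk
    · have : (fun μ : ProbabilityMeasure Y => (μ.map (f := g ∘ f) hgf.measurable.aemeasurable :
          ProbabilityMeasure (Set.Icc (0:ℝ) 1))) '' s = 
          (fun ν : ProbabilityMeasure (Set.Icc (0:ℝ) 1) => (ν : Measure (Set.Icc (0:ℝ) 1))) ⁻¹'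
          ((fun μ : ProbabilityMeasure Y => (μ : Measure Y).map (g ∘ f)) '' s) := by
        ext ν
        constructor
        · rintro ⟨μ, hμ, rfl⟩; exact ⟨μ, hμ, rfl⟩
        · rintro ⟨μ, hμ, h⟩; exact ⟨μ, hμ, Subtype.ext h⟩
      rw [this]
      exact measurable_subtype_coe (h1.measurableSet_image.2 hs)
  have : StandardBorelSpace (ProbabilityMeasure (Set.Icc (0:ℝ) 1)) := by
    have : PolishSpace (ProbabilityMeasure (Set.Icc (0:ℝ) 1)) := by
      let := TopologicalSpace.metrizableSpaceMetric (ProbabilityMeasure (Set.Icc (0:ℝ) 1))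
      infer_instance
    infer_instance
  exact standardBorel_of_embedding h2


/-! ### Basic facts on the Wasserstein functional -/

section WpBasic
variable {Y : Type*} [MeasurableSpace Y]

lemma Wp_le {p : ℝ} {d : Y → Y → ℝ≥0∞} {μ ν : Measure Y} {π : Measure (Y × Y)}
    (hπ : π ∈ Cpl μ ν) : Wp p d μ ν ≤ (∫⁻ z, d z.1 z.2 ^ p ∂π) ^ (1 / p) :=
  iInf₂_le π hπ

lemma Wp_self {p : ℝ} (hp : 0 < p) {d : Y → Y → ℝ≥0∞} (hd : ∀ x, d x x = 0) (μ : Measure Y) :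
    Wp p d μ μ = 0 := by
  have hm : Measurable (fun x : Y => (x, x)) := by fun_prop
  have h1 : μ.map (fun x => (x, x)) ∈ Cpl μ μ := by
    constructor
    · rw [Measure.map_map measurable_fst hm]; exact Measure.map_id
    · rw [Measure.map_map measurable_snd hm]; exact Measure.map_id
  have h2 := Wp_le (p := p) (d := d) h1
  have h3 : ∫⁻ z, d z.1 z.2 ^ p ∂(μ.map (fun x => (x, x))) ≤ 0 := by
    refine (lintegral_map_le (fun z : Y × Y => d z.1 z.2 ^ p) _).trans ?_
    simp [hd, hp]
  rw [nonpos_iff_eq_zero.1 h3, ENNReal.zero_rpow_of_pos (by positivity)] at h2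
  exact nonpos_iff_eq_zero.1 h2

lemma Wp_symm_le {p : ℝ} {d : Y → Y → ℝ≥0∞} (hd : ∀ x y, d x y = d y x) (μ ν : Measure Y) :
    Wp p d μ ν ≤ Wp p d ν μ := by
  refine le_iInf₂ fun π hπ => ?_
  have h1 : π.map Prod.swap ∈ Cpl μ ν := by
    constructor
    · rw [Measure.map_map measurable_fst measurable_swap]; exact hπ.2
    · rw [Measure.map_map measurable_snd measurable_swap]; exact hπ.1
  refine (Wp_le h1).trans (le_of_eq ?_)
  congr 1
  have := lintegral_map_equiv (μ := π) (fun z : Y × Y => d z.1 z.2 ^ p) MeasurableEquiv.prodComm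
  refine this.trans (lintegral_congr fun z => ?_)
  rw [hd z.1 z.2]; rfl

lemma Wp_symm {p : ℝ} {d : Y → Y → ℝ≥0∞} (hd : ∀ x y, d x y = d y x) (μ ν : Measure Y) :
    Wp p d μ ν = Wp p d ν μ := le_antisymm (Wp_symm_le hd _ _) (Wp_symm_le hd _ _)

lemma cpl_isProb {μ ν : Measure Y} [IsProbabilityMeasure μ] {π : Measure (Y × Y)}
    (hπ : π ∈ Cpl μ ν) : IsProbabilityMeasure π := by
  constructor
  have h : π.map Prod.fst Set.univ = 1 := by rw [hπ.1]; exact measure_univ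
  rwa [Measure.map_apply measurable_fst MeasurableSet.univ] at h

lemma lintegral_cost_le {p : ℝ} (hp : 0 < p) {d : Y → Y → ℝ≥0∞} {C : ℝ≥0∞}
    (hC : ∀ x y, d x y ≤ C) (π : Measure (Y × Y)) :
    ∫⁻ z, d z.1 z.2 ^ p ∂π ≤ C ^ p * π Set.univ := by
  calc ∫⁻ z, d z.1 z.2 ^ p ∂π ≤ ∫⁻ z, C ^ p ∂π :=
        lintegral_mono fun z => ENNReal.rpow_le_rpow (hC _ _) hp.le
    _ = _ := lintegral_const _

lemma Wp_le_of_bdd {p : ℝ} (hp : 0 < p) {d : Y → Y → ℝ≥0∞} {C : ℝ≥0∞} (hC : ∀ x y, d x y ≤ C)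
    (μ ν : Measure Y) [IsProbabilityMeasure μ] [IsProbabilityMeasure ν] : Wp p d μ ν ≤ C := by
  have h1 : μ.prod ν ∈ Cpl μ ν := ⟨Measure.fst_prod, Measure.snd_prod⟩
  refine (Wp_le h1).trans ?_
  calc (∫⁻ z, d z.1 z.2 ^ p ∂(μ.prod ν)) ^ (1 / p) ≤ (C ^ p) ^ (1 / p) := by
        refine ENNReal.rpow_le_rpow ?_ (by positivity)
        simpa using lintegral_cost_le hp hC (μ.prod ν)
    _ = C := by rw [← ENNReal.rpow_mul, mul_one_div_cancel hp.ne', ENNReal.rpow_one]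

lemma Wp_triangle [StandardBorelSpace Y] [Nonempty Y] {p : ℝ} (hp : 1 ≤ p) {d : Y → Y → ℝ≥0∞}
    (hd : Measurable (fun z : Y × Y => d z.1 z.2)) (htri : ∀ x y z, d x z ≤ d x y + d y z)
    (μ ν ξ : Measure Y) [IsProbabilityMeasure μ] [IsProbabilityMeasure ν] [IsProbabilityMeasure ξ] :
    Wp p d μ ξ ≤ Wp p d μ ν + Wp p d ν ξ := by
  have hp0 : 0 < p := by linarith
  unfold Wp
  refine ENNReal.le_iInf₂_add_iInf₂ fun π₁ h₁ π₂ h₂ => ?_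
  have := cpl_isProb h₁
  have := cpl_isProb h₂
  let π₁' := π₁.map Prod.swap
  have : IsProbabilityMeasure π₁' := Measure.isProbabilityMeasure_map measurable_swap.aemeasurable
  have h1f : π₁'.fst = ν := by
    rw [Measure.fst, Measure.map_map measurable_fst measurable_swap]; exact h₁.2
  have h2f : π₂.fst = ν := h₂.1
  let κ₁ := π₁'.condKernel
  let κ₂ := π₂.condKernel
  have e1 : ν ⊗ₘ κ₁ = π₁' := by rw [← h1f]; exact Measure.disintegrate _ _
  have e2 : ν ⊗ₘ κ₂ = π₂ := by rw [← h2f]; exact Measure.disintegrate _ _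
  let γ := ν ⊗ₘ (κ₁ ×ₖ κ₂)
  have g1 : γ.map (Prod.map id Prod.fst) = π₁' := by
    rw [← Measure.compProd_map measurable_fst, ← Kernel.fst_eq, Kernel.fst_prod, e1]
  have g2 : γ.map (Prod.map id Prod.snd) = π₂ := by
    rw [← Measure.compProd_map measurable_snd, ← Kernel.snd_eq, Kernel.snd_prod, e2]
  have hm1 : Measurable (Prod.map id Prod.fst : Y × (Y × Y) → Y × Y) := by fun_prop
  have hm2 : Measurable (Prod.map id Prod.snd : Y × (Y × Y) → Y × Y) := by fun_prop
  have g1' : γ.map (fun z => (z.2.1, z.1)) = π₁ := by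
    have : (fun z : Y × (Y × Y) => (z.2.1, z.1)) = Prod.swap ∘ (Prod.map id Prod.fst) := rfl
    rw [this, ← Measure.map_map measurable_swap hm1, g1, Measure.map_map measurable_swap measurable_swap]
    simp
  have g2' : γ.map (fun z => (z.1, z.2.2)) = π₂ := g2
  have hc : γ.map Prod.snd ∈ Cpl μ ξ := by
    constructor
    · rw [Measure.map_map measurable_fst measurable_snd, ← h₁.1, ← g1',
        Measure.map_map measurable_fst (by fun_prop)]; rfl
    · rw [Measure.map_map measurable_snd measurable_snd, ← h₂.2, ← g2',
        Measure.map_map measurable_snd (by fun_prop)]; rfl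
  have hdp : Measurable (fun z : Y × Y => d z.1 z.2 ^ p) := hd.pow_const p
  refine (Wp_le hc).trans ?_
  rw [lintegral_map hdp measurable_snd]
  have c1 : ∫⁻ z, d z.1 z.2 ^ p ∂π₁ = ∫⁻ z, d z.2.1 z.1 ^ p ∂γ := by
    conv_lhs => rw [← g1']
    rw [lintegral_map hdp (by fun_prop)]
  have c2 : ∫⁻ z, d z.1 z.2 ^ p ∂π₂ = ∫⁻ z, d z.1 z.2.2 ^ p ∂γ := by
    conv_lhs => rw [← g2']
    rw [lintegral_map hdp (by fun_prop)]
  rw [c1, c2]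
  have f1 : Measurable (fun z : Y × (Y × Y) => d z.2.1 z.1) :=
    hd.comp (f := fun z : Y × (Y × Y) => (z.2.1, z.1)) (by fun_prop)
  have f2 : Measurable (fun z : Y × (Y × Y) => d z.1 z.2.2) :=
    hd.comp (f := fun z : Y × (Y × Y) => (z.1, z.2.2)) (by fun_prop)
  refine le_trans ?_ (ENNReal.lintegral_Lp_add_le f1.aemeasurable f2.aemeasurable hp)
  refine ENNReal.rpow_le_rpow (lintegral_mono fun z => ?_) (by positivity)
  exact ENNReal.rpow_le_rpow (htri _ _ _) hp0.le

/-- Completing a sub-coupling to a coupling. -/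
lemma exists_coupling_of_sub {p : ℝ} (hp : 0 < p) {d : Y → Y → ℝ≥0∞} {C : ℝ≥0∞}
    (hC : ∀ x y, d x y ≤ C) (μ ν : Measure Y) [IsProbabilityMeasure μ] [IsProbabilityMeasure ν]
    (π₁ : Measure (Y × Y)) (h1 : π₁.map Prod.fst ≤ μ) (h2 : π₁.map Prod.snd ≤ ν) :
    Wp p d μ ν ≤ (∫⁻ z, d z.1 z.2 ^ p ∂π₁ + C ^ p * (1 - π₁ Set.univ)) ^ (1 / p) := by
  have hu1 : π₁.map Prod.fst Set.univ = π₁ Set.univ := by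
    rw [Measure.map_apply measurable_fst MeasurableSet.univ]; rfl
  have hu2 : π₁.map Prod.snd Set.univ = π₁ Set.univ := by
    rw [Measure.map_apply measurable_snd MeasurableSet.univ]; rfl
  have hle : π₁ Set.univ ≤ 1 := by
    rw [← hu1]; exact (h1 _).trans (by simp)
  have : IsFiniteMeasure π₁ := ⟨hle.trans_lt one_lt_top⟩
  set μ' := μ - π₁.map Prod.fst with hμ'
  set ν' := ν - π₁.map Prod.snd with hν'
  set s := 1 - π₁ Set.univ with hs
  have e1 : μ' + π₁.map Prod.fst = μ := Measure.sub_add_cancel_of_le h1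
  have e2 : ν' + π₁.map Prod.snd = ν := Measure.sub_add_cancel_of_le h2
  have m1 : μ' Set.univ = s := by
    rw [hμ', Measure.sub_apply MeasurableSet.univ h1, hu1, measure_univ]
  have m2 : ν' Set.univ = s := by
    rw [hν', Measure.sub_apply MeasurableSet.univ h2, hu2, measure_univ]
  have hs_ne_top : s ≠ ∞ := ne_top_of_le_ne_top one_ne_top tsub_le_self
  have : IsFiniteMeasure μ' := ⟨by rw [m1]; exact hs_ne_top.lt_top⟩
  have : IsFiniteMeasure ν' := ⟨by rw [m2]; exact hs_ne_top.lt_top⟩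
  by_cases hs0 : s = 0
  · have z1 : μ' = 0 := Measure.measure_univ_eq_zero.1 (m1.trans hs0)
    have z2 : ν' = 0 := Measure.measure_univ_eq_zero.1 (m2.trans hs0)
    rw [z1, zero_add] at e1
    rw [z2, zero_add] at e2
    refine (Wp_le ⟨e1, e2⟩).trans (ENNReal.rpow_le_rpow ?_ (by positivity))
    exact le_self_add
  · have hc : π₁ + s⁻¹ • μ'.prod ν' ∈ Cpl μ ν := by
      constructor
      · rw [Measure.map_add _ _ measurable_fst, Measure.map_smul, Measure.map_fst_prod, m2,
          smul_smul, ENNReal.inv_mul_cancel hs0 hs_ne_top, one_smul, add_comm, e1]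
      · rw [Measure.map_add _ _ measurable_snd, Measure.map_smul, Measure.map_snd_prod, m1,
          smul_smul, ENNReal.inv_mul_cancel hs0 hs_ne_top, one_smul, add_comm, e2]
    refine (Wp_le hc).trans (ENNReal.rpow_le_rpow ?_ (by positivity))
    rw [lintegral_add_measure]
    gcongr
    refine (lintegral_cost_le hp hC _).trans (le_of_eq ?_)
    congr 1
    rw [Measure.smul_apply, ← Set.univ_prod_univ, Measure.prod_prod, m1, m2, smul_eq_mul, ← mul_assoc,
      ENNReal.inv_mul_cancel hs0 hs_ne_top, one_mul]

end WpBasic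


section Pieces
variable {Y : Type*} [MeasurableSpace Y]

lemma sum_restrict_le (μ : Measure Y) (I : Finset ℕ) (A : ℕ → Set Y) (hA : ∀ i, MeasurableSet (A i))
    (hdisj : Pairwise (Function.onFun Disjoint A)) : ∑ i ∈ I, μ.restrict (A i) ≤ μ := by
  refine Measure.le_iff.2 fun s hs => ?_
  rw [Measure.finsetSum_apply]
  calc ∑ i ∈ I, μ.restrict (A i) s = ∑ i ∈ I, μ (s ∩ A i) := by
        simp [Measure.restrict_apply hs]
    _ = μ (⋃ i ∈ I, s ∩ A i) := by
        rw [measure_biUnion_finset]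
        · intro i _ j _ hij
          exact (hdisj hij).mono Set.inter_subset_right Set.inter_subset_right
        · exact fun i _ => hs.inter (hA i)
    _ ≤ μ s := measure_mono (by simp)

lemma Wp_le_of_pieces {p : ℝ} (hp : 0 < p) {d : Y → Y → ℝ≥0∞} {C : ℝ≥0∞}
    (hC : ∀ x y, d x y ≤ C) (μ ν : Measure Y) [IsProbabilityMeasure μ] [IsProbabilityMeasure ν]
    (I : Finset ℕ) (A : ℕ → Set Y) (hA : ∀ i, MeasurableSet (A i))
    (hdisj : Pairwise (Function.onFun Disjoint A)) (r : ℝ≥0∞)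
    (hr : ∀ i, ∀ x ∈ A i, ∀ y ∈ A i, d x y ≤ r) (t : ℝ≥0∞) (ht : t ≤ 1) (ht0 : t ≠ 0)
    (hne : ∀ i ∈ I, μ (A i) ≠ 0) (hν : ∀ i ∈ I, t * μ (A i) ≤ ν (A i)) :
    Wp p d μ ν ≤ (r ^ p + C ^ p * (1 - t * ∑ i ∈ I, μ (A i))) ^ (1 / p) := by
  have hneν : ∀ i ∈ I, ν (A i) ≠ 0 := fun i hi h => by
    have := hν i hi
    rw [h, nonpos_iff_eq_zero, mul_eq_zero] at this
    exact this.elim ht0 (hne i hi)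
  let π₁ : Measure (Y × Y) := ∑ i ∈ I, (t * μ (A i)) • (μ[|A i]).prod (ν[|A i])
  have hpm : ∀ i ∈ I, IsProbabilityMeasure (μ[|A i]) := fun i hi =>
    cond_isProbabilityMeasure (hne i hi)
  have hpn : ∀ i ∈ I, IsProbabilityMeasure (ν[|A i]) := fun i hi =>
    cond_isProbabilityMeasure (hneν i hi)
  have hmap : ∀ (f : Y × Y → Y), Measurable f → π₁.map f =
      ∑ i ∈ I, (t * μ (A i)) • ((μ[|A i]).prod (ν[|A i])).map f := by
    intro f hf
    have := map_sum (Measure.mapₗ f : Measure (Y × Y) →ₗ[ℝ≥0∞] Measure Y)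
      (fun i => (t * μ (A i)) • (μ[|A i]).prod (ν[|A i])) I
    simpa [Measure.mapₗ_apply_of_measurable hf, π₁] using this
  have h1 : π₁.map Prod.fst ≤ μ := by
    rw [hmap _ measurable_fst]
    refine le_trans (Finset.sum_le_sum fun i hi => ?_) (sum_restrict_le μ I A hA hdisj)
    have := hpn i hi
    rw [Measure.map_fst_prod, measure_univ, one_smul, ProbabilityTheory.cond, smul_smul, mul_assoc,
      ENNReal.mul_inv_cancel (hne i hi) (measure_ne_top _ _), mul_one]
    refine Measure.le_iff.2 fun s _ => ?_
    rw [Measure.smul_apply, smul_eq_mul]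
    exact mul_le_of_le_one_left' ht
  have h2 : π₁.map Prod.snd ≤ ν := by
    rw [hmap _ measurable_snd]
    refine le_trans (Finset.sum_le_sum fun i hi => ?_) (sum_restrict_le ν I A hA hdisj)
    have := hpm i hi
    rw [Measure.map_snd_prod, measure_univ, one_smul, ProbabilityTheory.cond, smul_smul]
    refine Measure.le_iff.2 fun s _ => ?_
    rw [Measure.smul_apply, smul_eq_mul]
    refine mul_le_of_le_one_left' ?_
    rw [← div_eq_mul_inv]
    exact ENNReal.div_le_of_le_mul (by rw [one_mul]; exact hν i hi)
  have hu : π₁ Set.univ = t * ∑ i ∈ I, μ (A i) := by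
    rw [Measure.finsetSum_apply, Finset.mul_sum]
    refine Finset.sum_congr rfl fun i hi => ?_
    have := hpm i hi
    have := hpn i hi
    simp
  have hu1 : π₁ Set.univ ≤ 1 := by
    have := h1 Set.univ
    rw [Measure.map_apply measurable_fst MeasurableSet.univ] at this
    simpa using this
  refine (exists_coupling_of_sub hp hC μ ν π₁ h1 h2).trans ?_
  rw [hu]
  refine ENNReal.rpow_le_rpow ?_ (by positivity)
  gcongr
  have hae : ∀ᵐ z ∂π₁, d z.1 z.2 ^ p ≤ r ^ p := by
    have : ∀ i ∈ I, ∀ᵐ z ∂((t * μ (A i)) • (μ[|A i]).prod (ν[|A i])), d z.1 z.2 ^ p ≤ r ^ p := by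
      intro i hi
      refine Measure.ae_smul_measure ?_ _
      have := hpm i hi
      have := hpn i hi
      have a1 : ∀ᵐ z ∂(μ[|A i]).prod (ν[|A i]), z.1 ∈ A i :=
        Measure.quasiMeasurePreserving_fst.ae (ae_cond_mem (hA i))
      have a2 : ∀ᵐ z ∂(μ[|A i]).prod (ν[|A i]), z.2 ∈ A i :=
        Measure.quasiMeasurePreserving_snd.ae (ae_cond_mem (hA i))
      filter_upwards [a1, a2] with z z1 z2
      exact ENNReal.rpow_le_rpow (hr i _ z1 _ z2) hp.le
    rw [ae_iff, Measure.finsetSum_apply]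
    exact Finset.sum_eq_zero fun i hi => ae_iff.1 (this i hi)
  calc ∫⁻ z, d z.1 z.2 ^ p ∂π₁ ≤ ∫⁻ z, r ^ p ∂π₁ := lintegral_mono_ae hae
    _ = r ^ p * π₁ Set.univ := lintegral_const _
    _ ≤ r ^ p := mul_le_of_le_one_right' hu1

end Pieces

section WeakW

lemma exists_open_pieces {Y : Type*} [PseudoMetricSpace Y] [SecondCountableTopology Y]
    [MeasurableSpace Y] [BorelSpace Y] (μ : Measure Y) [IsProbabilityMeasure μ] (δ : ℝ) (hδ : 0 < δ) :
    ∃ A : ℕ → Set Y, (∀ i, IsOpen (A i)) ∧ Pairwise (Function.onFun Disjoint A) ∧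
      (∀ i, ∀ x ∈ A i, ∀ y ∈ A i, edist x y ≤ ENNReal.ofReal δ) ∧ ∑' i, μ (A i) = 1 := by
  have hne : Nonempty Y := nonempty_of_isProbabilityMeasure μ
  let x := TopologicalSpace.denseSeq Y
  have hx : ∀ n, ∃ r ∈ Set.Ioo (δ / 4) (δ / 2), μ (frontier (Metric.ball (x n) r)) = 0 := by
    intro n
    obtain ⟨r, hr, h⟩ := exists_null_frontier_thickening μ {x n} (by linarith : δ / 4 < δ / 2)
    exact ⟨r, hr, by rwa [Metric.thickening_singleton] at h⟩
  choose r hr hr0 using hx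
  let B : ℕ → Set Y := fun n => Metric.ball (x n) (r n)
  let A : ℕ → Set Y := fun n => B n \ ⋃ m ∈ Finset.range n, closure (B m)
  have hAo : ∀ i, IsOpen (A i) := fun i =>
    Metric.isOpen_ball.sdiff (isClosed_biUnion_finset fun _ _ => isClosed_closure)
  have hdisj : Pairwise (Function.onFun Disjoint A) := by
    have key : ∀ i j, i < j → Disjoint (A i) (A j) := by
      intro i j hij
      refine Set.disjoint_left.2 fun y hy hy' => hy'.2 ?_
      exact Set.mem_biUnion (by simpa using hij) (subset_closure hy.1)
    intro i j hij
    rcases lt_or_gt_of_ne hij with h | h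
    · exact key i j h
    · exact (key j i h).symm
  refine ⟨A, hAo, hdisj, ?_, ?_⟩
  · intro i a ha b hb
    have h1 : dist a (x i) < r i := ha.1
    have h2 : dist b (x i) < r i := hb.1
    rw [edist_dist]
    refine ENNReal.ofReal_le_ofReal ?_
    have := dist_triangle_right a b (x i)
    have := (hr i).2
    linarith
  · rw [← measure_iUnion hdisj fun i => (hAo i).measurableSet]
    have : ∀ᵐ y ∂μ, y ∈ ⋃ i, A i := by
      have h0 : ∀ᵐ y ∂μ, ∀ n, y ∉ frontier (B n) := ae_all_iff.2 fun n => by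
        rw [ae_iff]; simpa using hr0 n
      filter_upwards [h0] with y hy
      have hex : ∃ n, y ∈ B n := by
        obtain ⟨n, hn⟩ := (TopologicalSpace.denseRange_denseSeq Y).exists_dist_lt y
          (by positivity : 0 < δ / 4)
        exact ⟨n, hn.trans (hr n).1⟩
      classical
      refine Set.mem_iUnion.2 ⟨Nat.find hex, Nat.find_spec hex, ?_⟩
      simp only [Finset.mem_range, Set.mem_iUnion, not_exists]
      intro m hm hc
      have h1 := Nat.find_min hex hm
      exact hy m ⟨hc, by rwa [Metric.isOpen_ball.interior_eq]⟩
    rw [measure_eq_measure_of_null_diff (Set.subset_univ (⋃ i, A i)) ?_, measure_univ]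
    rw [ae_iff] at this
    convert this using 2
    ext; simp

lemma eventually_Wp_lt {Y : Type*} [PseudoMetricSpace Y] [SecondCountableTopology Y]
    [MeasurableSpace Y] [BorelSpace Y] {p : ℝ} (hp : 0 < p) {C : ℝ≥0∞} (hCt : C ≠ ∞)
    (hC : ∀ x y : Y, edist x y ≤ C) (μ : ProbabilityMeasure Y) {ε : ℝ≥0∞} (hε : 0 < ε) :
    ∀ᶠ ν : ProbabilityMeasure Y in 𝓝 μ, Wp p edist (μ : Measure Y) (ν : Measure Y) < ε := by
  obtain ⟨δ, hδ0, hδ1, hδ⟩ : ∃ δ : ℝ, 0 < δ ∧ δ < 1 ∧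
      ((ENNReal.ofReal δ) ^ p + C ^ p * ENNReal.ofReal δ) ^ (1 / p) < ε := by
    have hc : Continuous fun δ : ℝ =>
        ((ENNReal.ofReal δ) ^ p + C ^ p * ENNReal.ofReal δ) ^ (1 / p) := by
      have h1 : Continuous fun x : ℝ≥0∞ => C ^ p * x :=
        ENNReal.continuous_const_mul (ENNReal.rpow_ne_top_of_nonneg hp.le hCt)
      have h2 : Continuous fun x : ℝ≥0∞ => x ^ p := ENNReal.continuous_rpow_const
      have h3 : Continuous fun x : ℝ≥0∞ => x ^ (1 / p) := ENNReal.continuous_rpow_const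
      exact h3.comp ((h2.comp ENNReal.continuous_ofReal).add (h1.comp ENNReal.continuous_ofReal))
    have ht := hc.tendsto 0
    simp only [ENNReal.ofReal_zero, ENNReal.zero_rpow_of_pos hp, mul_zero, add_zero,
      ENNReal.zero_rpow_of_pos (one_div_pos.2 hp)] at ht
    have h1 := (ht.eventually_lt_const hε).filter_mono (nhdsWithin_le_nhds (s := Set.Ioi 0))
    have h2 : ∀ᶠ δ : ℝ in 𝓝[>] 0, δ ∈ Set.Ioo (0:ℝ) 1 := Ioo_mem_nhdsGT one_pos
    obtain ⟨δ, h, h'⟩ := (h1.and h2).exists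
    exact ⟨δ, h'.1, h'.2, h⟩
  obtain ⟨A, hAo, hdisj, hd, hsum⟩ := exists_open_pieces (μ : Measure Y) δ hδ0
  set t : ℝ≥0∞ := ENNReal.ofReal (1 - δ / 2) with ht
  have ht1 : t < 1 := by
    rw [ht, ← ENNReal.ofReal_one]
    exact (ENNReal.ofReal_lt_ofReal_iff one_pos).2 (by linarith)
  have ht0 : t ≠ 0 := by
    rw [ht]; simp; linarith
  obtain ⟨n, hn⟩ : ∃ n, t < ∑ i ∈ Finset.range n, (μ : Measure Y) (A i) := by
    have := ENNReal.tendsto_nat_tsum (fun i => (μ : Measure Y) (A i))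
    rw [hsum] at this
    exact (this.eventually_const_lt ht1).exists
  classical
  let I := (Finset.range n).filter fun i => (μ : Measure Y) (A i) ≠ 0
  have hI : ∑ i ∈ I, (μ : Measure Y) (A i) = ∑ i ∈ Finset.range n, (μ : Measure Y) (A i) :=
    Finset.sum_filter_ne_zero _
  have hev : ∀ᶠ ν : ProbabilityMeasure Y in 𝓝 μ, ∀ i ∈ I,
      t * (μ : Measure Y) (A i) ≤ (ν : Measure Y) (A i) := by
    refine (Finset.eventually_all I).2 fun i hi => ?_
    have hi0 : (μ : Measure Y) (A i) ≠ 0 := (Finset.mem_filter.1 hi).2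
    have h1 := ProbabilityMeasure.le_liminf_measure_open_of_tendsto
      (tendsto_id (x := 𝓝 μ)) (hAo i)
    have h2 : t * (μ : Measure Y) (A i) < (μ : Measure Y) (A i) := by
      conv_rhs => rw [← one_mul ((μ : Measure Y) (A i))]
      exact ENNReal.mul_lt_mul_left hi0 (measure_ne_top _ _) ht1
    have h3 := eventually_lt_of_lt_liminf (h2.trans_le h1)
    exact h3.mono fun ν hν => hν.le
  filter_upwards [hev] with ν hν
  refine lt_of_le_of_lt ?_ hδ
  refine (Wp_le_of_pieces hp hC (μ : Measure Y) (ν : Measure Y) I A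
    (fun i => (hAo i).measurableSet) hdisj (ENNReal.ofReal δ) hd t ht1.le ht0
    (fun i hi => (Finset.mem_filter.1 hi).2) hν).trans ?_
  refine ENNReal.rpow_le_rpow ?_ (by positivity)
  gcongr
  rw [hI]
  calc 1 - t * ∑ i ∈ Finset.range n, (μ : Measure Y) (A i) ≤ 1 - t * t := by gcongr
    _ ≤ ENNReal.ofReal δ := by
      rw [tsub_le_iff_right, ht, ← ENNReal.ofReal_mul (by linarith), ← ENNReal.ofReal_add hδ0.le
        (mul_self_nonneg _), ← ENNReal.ofReal_one]
      exact ENNReal.ofReal_le_ofReal (by nlinarith)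

lemma lintegral_le_Lp {Z : Type*} [MeasurableSpace Z] (π : Measure Z) [IsProbabilityMeasure π] {p : ℝ}
    (hp : 1 ≤ p) {f : Z → ℝ≥0∞} (hf : Measurable f) :
    ∫⁻ z, f z ∂π ≤ (∫⁻ z, f z ^ p ∂π) ^ (1 / p) := by
  have h := eLpNorm'_le_eLpNorm'_of_exponent_le (f := f) (μ := π) one_pos hp
    hf.stronglyMeasurable.aestronglyMeasurable
  simpa [eLpNorm'] using h

lemma tendsto_of_Wp {Y : Type*} [PseudoEMetricSpace Y] [SecondCountableTopology Y]
    [MeasurableSpace Y] [BorelSpace Y] {p : ℝ} (hp : 1 ≤ p) (μ : ProbabilityMeasure Y) :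
    comap (fun ν : ProbabilityMeasure Y => Wp p edist (μ : Measure Y) (ν : Measure Y)) (𝓝 0) ≤ 𝓝 μ := by
  have : Tendsto (fun ν : ProbabilityMeasure Y => ν)
    (comap (fun ν : ProbabilityMeasure Y => Wp p edist (μ : Measure Y) (ν : Measure Y)) (𝓝 0))
      (𝓝 μ) := by
    rw [tendsto_iff_forall_lipschitz_integral_tendsto]
    rintro f ⟨C, hC⟩ ⟨L, hL⟩
    have hintegr : ∀ ν : ProbabilityMeasure Y, Integrable f (ν : Measure Y) := by
      intro ν
      have := nonempty_of_isProbabilityMeasure (ν : Measure Y)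
      inhabit Y
      refine Integrable.of_bound (C := ‖f default‖ + C) hL.continuous.measurable.aestronglyMeasurable
        (ae_of_all _ fun y => ?_)
      have h1 := hC y default
      rw [dist_eq_norm] at h1
      have := norm_le_norm_add_norm_sub' (f y) (f default)
      linarith
    have hK0 : (L : ℝ≥0∞) + 1 ≠ 0 := by simp
    have hKt : (L : ℝ≥0∞) + 1 ≠ ∞ := by simp
    have key : ∀ ν : ProbabilityMeasure Y,
        edist (∫ y, f y ∂(ν : Measure Y)) (∫ y, f y ∂(μ : Measure Y)) ≤
          (L + 1) * Wp p edist (μ : Measure Y) (ν : Measure Y) := by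
      intro ν
      rw [mul_comm, ← ENNReal.div_le_iff_le_mul (Or.inl hK0) (Or.inl hKt)]
      refine le_iInf₂ fun π hπ => ?_
      rw [ENNReal.div_le_iff_le_mul (Or.inl hK0) (Or.inl hKt), mul_comm]
      have := cpl_isProb hπ
      have i1 : Integrable (fun z : Y × Y => f z.1) π := by
        have := hintegr μ
        rw [← hπ.1] at this
        exact (integrable_map_measure (hL.continuous.measurable.aestronglyMeasurable)
          measurable_fst.aemeasurable).1 this
      have i2 : Integrable (fun z : Y × Y => f z.2) π := by
        have := hintegr ν
        rw [← hπ.2] at this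
        exact (integrable_map_measure (hL.continuous.measurable.aestronglyMeasurable)
          measurable_snd.aemeasurable).1 this
      have e1 : ∫ y, f y ∂(μ : Measure Y) = ∫ z, f z.1 ∂π := by
        rw [← hπ.1, integral_map measurable_fst.aemeasurable
          hL.continuous.measurable.aestronglyMeasurable]
      have e2 : ∫ y, f y ∂(ν : Measure Y) = ∫ z, f z.2 ∂π := by
        rw [← hπ.2, integral_map measurable_snd.aemeasurable
          hL.continuous.measurable.aestronglyMeasurable]
      rw [edist_comm, e1, e2, edist_eq_enorm_sub, ← integral_sub i1 i2]
      refine (enorm_integral_le_lintegral_enorm _).trans ?_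
      have hm : Measurable (fun z : Y × Y => edist z.1 z.2) := measurable_fst.edist measurable_snd
      calc ∫⁻ z, ‖f z.1 - f z.2‖ₑ ∂π ≤ ∫⁻ z, (L + 1) * edist z.1 z.2 ∂π := by
            refine lintegral_mono fun z => ?_
            rw [← edist_eq_enorm_sub]
            exact (hL z.1 z.2).trans (by gcongr; exact le_self_add)
        _ = (L + 1) * ∫⁻ z, edist z.1 z.2 ∂π := lintegral_const_mul _ hm
        _ ≤ _ := by gcongr; exact lintegral_le_Lp π hp hm
    rw [tendsto_iff_edist_tendsto_0]
    have h0 : Tendsto (fun ν : ProbabilityMeasure Y =>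
        ((L : ℝ≥0∞) + 1) * Wp p edist (μ : Measure Y) (ν : Measure Y))
        (comap (fun ν : ProbabilityMeasure Y => Wp p edist (μ : Measure Y) (ν : Measure Y)) (𝓝 0))
        (𝓝 0) := by
      have := (ENNReal.continuous_const_mul hKt).tendsto 0
      rw [mul_zero] at this
      exact this.comp tendsto_comap
    exact tendsto_of_tendsto_of_tendsto_of_le_of_le tendsto_const_nhds h0
      (fun _ => zero_le) key
  exact this

end WeakW


/-- A bounded pseudo-distance inducing the given topology. -/
structure GoodDist {Y : Type*} [TopologicalSpace Y] (d : Y → Y → ℝ≥0∞) : Prop where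
  self : ∀ x, d x x = 0
  symm : ∀ x y, d x y = d y x
  tri : ∀ x y z, d x z ≤ d x y + d y z
  bdd : ∃ C : ℝ≥0∞, C ≠ ∞ ∧ ∀ x y, d x y ≤ C
  basis : ∀ x, (𝓝 x).HasBasis (fun ε : ℝ≥0∞ => 0 < ε) (fun ε => {y | d x y < ε})

lemma GoodDist.exists_metric {Y : Type*} [t : TopologicalSpace Y] {d : Y → Y → ℝ≥0∞}
    (h : GoodDist d) : ∃ M : PseudoMetricSpace Y,
      M.toUniformSpace.toTopologicalSpace = t ∧ (fun x y => @edist Y _ x y) = d := by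
  let M₀ : PseudoEMetricSpace Y :=
    { edist := d, edist_self := h.self, edist_comm := h.symm, edist_triangle := h.tri }
  obtain ⟨C, hC, hb⟩ := h.bdd
  let M := PseudoEMetricSpace.toPseudoMetricSpace (α := Y)
    (fun x y => ne_top_of_le_ne_top hC (hb x y))
  refine ⟨M, ?_, rfl⟩
  refine TopologicalSpace.ext_nhds fun x => ?_
  have h1 := @EMetric.nhds_basis_eball Y M₀ x
  have h2 := h.basis x
  have h3 : (fun ε : ℝ≥0∞ => {y | d x y < ε}) = @Metric.eball Y M₀.toEDist x := by
    funext ε; ext y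
    show d x y < ε ↔ d y x < ε
    rw [h.symm]
  rw [h3] at h2
  exact h1.eq_of_same_basis h2

lemma goodDist_edist {Y : Type*} [PseudoMetricSpace Y] {C : ℝ≥0∞} (hCt : C ≠ ∞)
    (hC : ∀ x y : Y, edist x y ≤ C) : GoodDist (fun x y : Y => edist x y) where
  self := edist_self
  symm := edist_comm
  tri := edist_triangle
  bdd := ⟨C, hCt, hC⟩
  basis x := by
    have := EMetric.nhds_basis_eball (x := x)
    have h3 : (fun ε : ℝ≥0∞ => {y | edist x y < ε}) = Metric.eball x := by
      funext ε; ext y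
      simp [edist_comm]
    rw [h3]; exact this

lemma GoodDist.measurable {Y : Type*} [TopologicalSpace Y] [SecondCountableTopology Y]
    [MeasurableSpace Y] [BorelSpace Y] {d : Y → Y → ℝ≥0∞} (h : GoodDist d) :
    Measurable (fun z : Y × Y => d z.1 z.2) := by
  obtain ⟨M, rfl, rfl⟩ := h.exists_metric
  exact measurable_fst.edist measurable_snd

lemma GoodDist.wp {Y : Type*} [TopologicalSpace Y] [SecondCountableTopology Y]
    [MeasurableSpace Y] [BorelSpace Y] [StandardBorelSpace Y] [Nonempty Y]
    {d : Y → Y → ℝ≥0∞} (h : GoodDist d) {p : ℝ} (hp : 1 ≤ p) :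
    GoodDist (fun μ ν : ProbabilityMeasure Y => Wp p d (μ : Measure Y) (ν : Measure Y)) where
  self μ := Wp_self (by linarith) h.self _
  symm μ ν := Wp_symm h.symm _ _
  tri μ ν ξ := Wp_triangle hp h.measurable h.tri _ _ _
  bdd := by
    obtain ⟨C, hC, hb⟩ := h.bdd
    exact ⟨C, hC, fun μ ν => Wp_le_of_bdd (by linarith) hb _ _⟩
  basis μ := by
    obtain ⟨C, hC, hb⟩ := h.bdd
    obtain ⟨M, rfl, rfl⟩ := h.exists_metric
    refine ⟨fun s => ⟨fun hs => ?_, ?_⟩⟩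
    · have := tendsto_of_Wp hp μ hs
      obtain ⟨ε, hε, h'⟩ := (ENNReal.nhds_zero_basis.comap
        (fun ν : ProbabilityMeasure Y => Wp p edist (μ : Measure Y) (ν : Measure Y))).mem_iff.1 this
      exact ⟨ε, hε, h'⟩
    · rintro ⟨ε, hε, h'⟩
      exact mem_of_superset (eventually_Wp_lt (by linarith) hC hb μ hε) h'

lemma Lp_two_add_le {p : ℝ} (hp : 1 ≤ p) (a b c e : ℝ≥0∞) :
    ((a + b) ^ p + (c + e) ^ p) ^ (1 / p) ≤ (a ^ p + c ^ p) ^ (1 / p) + (b ^ p + e ^ p) ^ (1 / p) := by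
  have := ENNReal.Lp_add_le (Finset.univ : Finset (Fin 2)) ![a, c] ![b, e] hp
  simpa [Fin.sum_univ_two] using this

lemma GoodDist.prod {Y Z : Type*} [TopologicalSpace Y] [TopologicalSpace Z]
    {d : Y → Y → ℝ≥0∞} {e : Z → Z → ℝ≥0∞} (h : GoodDist d) (h' : GoodDist e) {p : ℝ} (hp : 1 ≤ p) :
    GoodDist (fun a b : Y × Z => (d a.1 b.1 ^ p + e a.2 b.2 ^ p) ^ (1 / p)) where
  self x := by
    have : 0 < p := by linarith
    simp [h.self, h'.self, this]
  symm x y := by rw [h.symm, h'.symm]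
  tri x y z := by
    have : 0 < p := by linarith
    refine le_trans ?_ (Lp_two_add_le hp _ _ _ _)
    refine ENNReal.rpow_le_rpow (add_le_add ?_ ?_) (by positivity)
    · exact ENNReal.rpow_le_rpow (h.tri _ _ _) this.le
    · exact ENNReal.rpow_le_rpow (h'.tri _ _ _) this.le
  bdd := by
    have : 0 < p := by linarith
    obtain ⟨C, hC, hb⟩ := h.bdd
    obtain ⟨C', hC', hb'⟩ := h'.bdd
    refine ⟨(C ^ p + C' ^ p) ^ (1 / p), ?_, fun x y => ?_⟩
    · refine ENNReal.rpow_ne_top_of_nonneg (by positivity) (ENNReal.add_ne_top.2 ⟨?_, ?_⟩)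
      · exact ENNReal.rpow_ne_top_of_nonneg this.le hC
      · exact ENNReal.rpow_ne_top_of_nonneg this.le hC'
    · refine ENNReal.rpow_le_rpow (add_le_add ?_ ?_) (by positivity)
      · exact ENNReal.rpow_le_rpow (hb _ _) this.le
      · exact ENNReal.rpow_le_rpow (hb' _ _) this.le
  basis x := by
    have hp0 : 0 < p := by linarith
    have hb := (h.basis x.1).prod_nhds (h'.basis x.2)
    refine ⟨fun s => ⟨fun hs => ?_, ?_⟩⟩
    · obtain ⟨⟨ε₁, ε₂⟩, ⟨h1, h2⟩, h3⟩ := hb.mem_iff.1 hs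
      refine ⟨min ε₁ ε₂, lt_min h1 h2, fun y hy => h3 ?_⟩
      have hy' : (d x.1 y.1 ^ p + e x.2 y.2 ^ p) ^ (1 / p) < min ε₁ ε₂ := hy
      have k : ∀ a : ℝ≥0∞, a = (a ^ p) ^ (1 / p) := fun a => by
        rw [← ENNReal.rpow_mul, mul_one_div_cancel hp0.ne', ENNReal.rpow_one]
      constructor
      · refine lt_of_le_of_lt ?_ (hy'.trans_le (min_le_left _ _))
        conv_lhs => rw [k (d x.1 y.1)]
        exact ENNReal.rpow_le_rpow le_self_add (by positivity)
      · refine lt_of_le_of_lt ?_ (hy'.trans_le (min_le_right _ _))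
        conv_lhs => rw [k (e x.2 y.2)]
        exact ENNReal.rpow_le_rpow le_add_self (by positivity)
    · rintro ⟨ε, hε, h3⟩
      have hc : Continuous fun δ : ℝ≥0∞ => (δ ^ p + δ ^ p) ^ (1 / p) := by
        have h2 : Continuous fun x : ℝ≥0∞ => x ^ p := ENNReal.continuous_rpow_const
        have h3 : Continuous fun x : ℝ≥0∞ => x ^ (1 / p) := ENNReal.continuous_rpow_const
        exact h3.comp (h2.add h2)
      have ht := hc.tendsto 0
      simp only [ENNReal.zero_rpow_of_pos hp0, add_zero,
        ENNReal.zero_rpow_of_pos (one_div_pos.2 hp0)] at ht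
      have h1 := ht.eventually_lt_const hε
      obtain ⟨δ, hδ0, hδ⟩ := ENNReal.nhds_zero_basis_Iic.mem_iff.1 h1
      refine mem_of_superset (hb.mem_of_mem (i := (δ, δ)) ⟨hδ0, hδ0⟩) fun y hy => h3 ?_
      have h4 : (δ ^ p + δ ^ p) ^ (1 / p) < ε := hδ (le_refl δ)
      refine lt_of_le_of_lt ?_ h4
      refine ENNReal.rpow_le_rpow (add_le_add ?_ ?_) (by positivity)
      · exact ENNReal.rpow_le_rpow (le_of_lt hy.1) hp0.le
      · exact ENNReal.rpow_le_rpow (le_of_lt hy.2) hp0.le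


/-- An isometric measurable embedding whose complement of range is at infinite distance. -/
structure IsoEmb {Y Z : Type*} [MeasurableSpace Y] [MeasurableSpace Z] (ι : Y → Z)
    (d : Y → Y → ℝ≥0∞) (D : Z → Z → ℝ≥0∞) : Prop where
  emb : MeasurableEmbedding ι
  iso : ∀ a b, D (ι a) (ι b) = d a b
  top : ∀ a z, z ∉ Set.range ι → D (ι a) z = ∞
  symm : ∀ z w, D z w = D w z
  self : ∀ z, D z z = 0

lemma IsoEmb.prod {X Y Z : Type*} [MeasurableSpace X] [MeasurableSpace Y] [MeasurableSpace Z]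
    {ι : Y → Z} {e : Y → Y → ℝ≥0∞} {E : Z → Z → ℝ≥0∞} (h : IsoEmb ι e E) {d : X → X → ℝ≥0∞}
    (hs : ∀ x, d x x = 0) (hsy : ∀ x y, d x y = d y x) {p : ℝ} (hp : 1 ≤ p) :
    IsoEmb (fun a : X × Y => (a.1, ι a.2))
      (fun a b => (d a.1 b.1 ^ p + e a.2 b.2 ^ p) ^ (1 / p))
      (fun a b => (d a.1 b.1 ^ p + E a.2 b.2 ^ p) ^ (1 / p)) where
  emb := MeasurableEmbedding.id.prodMap h.emb
  iso a b := by simp only [h.iso]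
  top a z hz := by
    have hp0 : 0 < p := by linarith
    have : z.2 ∉ Set.range ι := fun ⟨y, hy⟩ => hz ⟨(z.1, y), by simp [hy]⟩
    simp [h.top _ _ this, hp0]
  symm z w := by rw [hsy, h.symm]
  self z := by
    have hp0 : 0 < p := by linarith
    simp [hs, h.self, hp0]

lemma IsoEmb.wp {Y Z : Type*} [MeasurableSpace Y] [MeasurableSpace Z]
    {ι : Y → Z} {d : Y → Y → ℝ≥0∞} {D : Z → Z → ℝ≥0∞} (h : IsoEmb ι d D) {p : ℝ} (hp : 1 ≤ p) :
    IsoEmb (fun q : ProbabilityMeasure Y => (q : Measure Y).map ι)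
      (fun q q' => Wp p d (q : Measure Y) (q' : Measure Y)) (Wp p D) where
  emb := (measurableEmbedding_pm_map h.emb).1
  symm := Wp_symm h.symm
  self := Wp_self (by linarith) h.self
  iso q q' := by
    have hι := h.emb
    have h2 : MeasurableEmbedding (Prod.map ι ι) := hι.prodMap hι
    have hcost : ∀ π : Measure (Y × Y), ∫⁻ z, D z.1 z.2 ^ p ∂(π.map (Prod.map ι ι)) =
        ∫⁻ z, d z.1 z.2 ^ p ∂π := by
      intro π
      rw [h2.lintegral_map]
      simp [h.iso]
    have hinj : ∀ m m' : Measure Y, m.map ι = m'.map ι → m = m' := by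
      intro m m' hm
      have := congrArg (Measure.comap ι) hm
      rwa [hι.comap_map, hι.comap_map] at this
    apply le_antisymm
    · refine le_iInf₂ fun π hπ => ?_
      rw [← hcost]
      refine Wp_le ⟨?_, ?_⟩
      · rw [Measure.map_map measurable_fst h2.measurable, ← hπ.1,
          Measure.map_map hι.measurable measurable_fst]; rfl
      · rw [Measure.map_map measurable_snd h2.measurable, ← hπ.2,
          Measure.map_map hι.measurable measurable_snd]; rfl
    · refine le_iInf₂ fun π hπ => ?_
      have a1 : ∀ᵐ z ∂π, z.1 ∈ Set.range ι := by
        have : ∀ᵐ z ∂(π.map Prod.fst), z ∈ Set.range ι := by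
          rw [hπ.1]; exact hι.ae_map_iff.2 (ae_of_all _ fun y => ⟨y, rfl⟩)
        exact ae_of_ae_map measurable_fst.aemeasurable this
      have a2 : ∀ᵐ z ∂π, z.2 ∈ Set.range ι := by
        have : ∀ᵐ z ∂(π.map Prod.snd), z ∈ Set.range ι := by
          rw [hπ.2]; exact hι.ae_map_iff.2 (ae_of_all _ fun y => ⟨y, rfl⟩)
        exact ae_of_ae_map measurable_snd.aemeasurable this
      have a3 : ∀ᵐ z ∂π, z ∈ Set.range (Prod.map ι ι) := by
        filter_upwards [a1, a2] with z z1 z2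
        rw [Set.range_prodMap]; exact ⟨z1, z2⟩
      have hc : (π.comap (Prod.map ι ι)).map (Prod.map ι ι) = π := by
        rw [h2.map_comap, Measure.restrict_eq_self_of_ae_mem a3]
      set π' := π.comap (Prod.map ι ι)
      rw [← hc, hcost]
      refine Wp_le ⟨hinj _ _ ?_, hinj _ _ ?_⟩
      · rw [Measure.map_map hι.measurable measurable_fst, ← hπ.1, ← hc,
          Measure.map_map measurable_fst h2.measurable]; rfl
      · rw [Measure.map_map hι.measurable measurable_snd, ← hπ.2, ← hc,
          Measure.map_map measurable_snd h2.measurable]; rfl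
  top q m hm := by
    have hp0 : 0 < p := by linarith
    have hι := h.emb
    rw [(measurableEmbedding_pm_map h.emb).2] at hm
    refine eq_top_iff.2 (le_iInf₂ fun π hπ => ?_)
    have : IsProbabilityMeasure ((q : Measure Y).map ι) :=
      Measure.isProbabilityMeasure_map hι.measurable.aemeasurable
    have : IsProbabilityMeasure π := cpl_isProb hπ
    have hmp : IsProbabilityMeasure m := by
      rw [← hπ.2]; exact Measure.isProbabilityMeasure_map measurable_snd.aemeasurable
    have hm0 : m (Set.range ι)ᶜ ≠ 0 := fun h0 => hm ⟨hmp, h0⟩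
    have a1 : ∀ᵐ z ∂π, z.1 ∈ Set.range ι := by
      have : ∀ᵐ z ∂(π.map Prod.fst), z ∈ Set.range ι := by
        rw [hπ.1]; exact hι.ae_map_iff.2 (ae_of_all _ fun y => ⟨y, rfl⟩)
      exact ae_of_ae_map measurable_fst.aemeasurable this
    set S : Set (Z × Z) := Prod.snd ⁻¹' (Set.range ι)ᶜ with hS
    have hSm : MeasurableSet S := measurable_snd hι.measurableSet_range.compl
    have hS0 : π S ≠ 0 := by
      rw [← hπ.2, Measure.map_apply measurable_snd hι.measurableSet_range.compl] at hm0
      exact hm0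
    have : ∫⁻ z, D z.1 z.2 ^ p ∂π = ∞ := by
      refine eq_top_iff.2 ?_
      calc (∞ : ℝ≥0∞) = ∞ * π S := (ENNReal.top_mul hS0).symm
        _ = ∫⁻ z in S, ∞ ∂π := by rw [setLIntegral_const]
        _ ≤ ∫⁻ z in S, D z.1 z.2 ^ p ∂π := by
            refine lintegral_mono_ae ?_
            filter_upwards [ae_restrict_mem hSm, ae_restrict_of_ae a1] with z z1 ⟨y, hy⟩
            rw [← hy, h.top _ _ z1, ENNReal.top_rpow_of_pos hp0]
        _ ≤ _ := setLIntegral_le_lintegral _ _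
    rw [this, ENNReal.top_rpow_of_pos (by positivity)]

/-- The induced map into the ball topology is a closed embedding. -/
lemma IsoEmb.isClosedEmbedding {Y Z : Type*} [MeasurableSpace Y] [TopologicalSpace Y]
    [MeasurableSpace Z] {ι : Y → Z} {d : Y → Y → ℝ≥0∞} {D : Z → Z → ℝ≥0∞} (h : IsoEmb ι d D)
    (hd : GoodDist d) (P : Z → Prop) (hP : ∀ y, P (ι y)) :
    @IsClosedEmbedding Y {z // P z} _ (ballTop (fun z w => D z.1 w.1)) (fun y => ⟨ι y, hP y⟩) := by
  letI : TopologicalSpace {z // P z} := ballTop (fun z w => D z.1 w.1)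
  have hball : ∀ (z : {z // P z}) (ε : ℝ≥0∞), 0 < ε → IsOpen {w : {z // P z} | D z.1 w.1 < ε} :=
    fun z ε hε => TopologicalSpace.isOpen_generateFrom_of_mem ⟨z, ε, hε, rfl⟩
  have hopen : ∀ (y : Y) (ε : ℝ≥0∞), IsOpen {y' | d y y' < ε} := by
    intro y ε
    refine isOpen_iff_mem_nhds.2 fun y' hy' => ?_
    refine (hd.basis y').mem_iff.2 ⟨ε - d y y', tsub_pos_of_lt hy', fun w hw => ?_⟩
    have hw' : d y' w < ε - d y y' := hw
    exact (hd.tri y y' w).trans_lt (by rw [add_comm]; exact lt_tsub_iff_right.1 hw')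
  have hcont : Continuous (fun y => (⟨ι y, hP y⟩ : {z // P z})) := by
    refine continuous_generateFrom_iff.2 ?_
    rintro s ⟨z, ε, hε, rfl⟩
    by_cases hz : z.1 ∈ Set.range ι
    · obtain ⟨y, hy⟩ := hz
      have : (fun y => (⟨ι y, hP y⟩ : {z // P z})) ⁻¹' {w | D z.1 w.1 < ε} = {y' | d y y' < ε} := by
        ext y'
        simp [← hy, h.iso]
      rw [this]; exact hopen y ε
    · have : (fun y => (⟨ι y, hP y⟩ : {z // P z})) ⁻¹' {w | D z.1 w.1 < ε} = ∅ := by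
        ext y'
        simp [h.symm z.1, h.top _ _ hz]
      rw [this]; exact isOpen_empty
  refine ⟨⟨⟨?_⟩, fun a b hab => h.emb.injective (congrArg Subtype.val hab)⟩, ?_⟩
  · refine le_antisymm hcont.le_induced ?_
    refine TopologicalSpace.le_def.2 fun V hV => ?_
    refine isOpen_induced_iff.2 ⟨⋃ (y : Y) (ε : ℝ≥0∞) (_ : 0 < ε ∧ {y' | d y y' < ε} ⊆ V),
      {w : {z // P z} | D (ι y) w.1 < ε}, ?_, ?_⟩
    · exact isOpen_iUnion fun y => isOpen_iUnion fun ε => isOpen_iUnion fun hε =>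
        hball ⟨ι y, hP y⟩ ε hε.1
    · ext y'
      simp only [Set.mem_preimage, Set.mem_iUnion, Set.mem_setOf_eq, h.iso, exists_prop]
      constructor
      · rintro ⟨y, ε, ⟨_, hs⟩, hlt⟩; exact hs hlt
      · intro hy'
        obtain ⟨ε, hε, hs⟩ := (hd.basis y').mem_iff.1 (hV.mem_nhds hy')
        exact ⟨y', ε, ⟨hε, hs⟩, by rw [hd.self]; exact hε⟩
  · constructor
    have : (Set.range fun y => (⟨ι y, hP y⟩ : {z // P z}))ᶜ =
        ⋃ (z : {z // P z}) (_ : z.1 ∉ Set.range ι), {w : {z // P z} | D z.1 w.1 < 1} := by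
      ext w
      simp only [Set.mem_compl_iff, Set.mem_iUnion, Set.mem_setOf_eq, exists_prop]
      constructor
      · intro hw
        refine ⟨w, fun ⟨y, hy⟩ => hw ⟨y, Subtype.ext hy⟩, by rw [h.self]; exact one_pos⟩
      · rintro ⟨z, hz, hlt⟩ ⟨y, rfl⟩
        simp [h.symm z.1, h.top _ _ hz] at hlt
    rw [this]
    exact isOpen_iUnion fun z => isOpen_iUnion fun _ => hball z 1 one_pos


/-- Barycenter of a random probability measure. -/
def pbind {Y W : Type*} [MeasurableSpace Y] [MeasurableSpace W] (u : Y → ProbabilityMeasure W)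
    (hu : Measurable u) (m : ProbabilityMeasure Y) : ProbabilityMeasure W :=
  ⟨(m : Measure Y).bind (fun y => (u y : Measure W)),
    isProbabilityMeasure_bind (measurable_subtype_coe.comp hu).aemeasurable
      (ae_of_all _ fun y => (u y).2)⟩

lemma continuous_pbind {Y W : Type*} [TopologicalSpace Y] [MeasurableSpace Y]
    [OpensMeasurableSpace Y]
    [TopologicalSpace W] [MeasurableSpace W] [OpensMeasurableSpace W]
    {u : Y → ProbabilityMeasure W} (hc : Continuous u) (hu : Measurable u) :
    Continuous (pbind u hu) := by
  refine continuous_iff_continuousAt.2 fun m => ?_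
  refine ProbabilityMeasure.tendsto_iff_forall_integral_tendsto.2 fun f => ?_
  let F : BoundedContinuousFunction Y ℝ := BoundedContinuousFunction.ofNormedAddCommGroup
    (fun y => ∫ w, f w ∂(u y : Measure W))
    ((ProbabilityMeasure.continuous_integral_boundedContinuousFunction f).comp hc) ‖f‖
    (fun y => by
      refine (norm_integral_le_of_norm_le_const (ae_of_all _ f.norm_coe_le_norm)).trans ?_
      simp)
  let κ : Kernel Y W := ⟨fun y => (u y : Measure W), measurable_subtype_coe.comp hu⟩
  have key : ∀ m : ProbabilityMeasure Y,
      ∫ w, f w ∂(pbind u hu m : Measure W) = ∫ y, F y ∂(m : Measure Y) := by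
    intro m
    have heq : (κ ∘ₖ Kernel.const Unit (m : Measure Y)) () = (pbind u hu m : Measure W) := by
      rw [Kernel.comp_apply, Kernel.const_apply]; rfl
    have hintegr : Integrable (fun w => f w) ((κ ∘ₖ Kernel.const Unit (m : Measure Y)) ()) := by
      rw [heq]; exact f.integrable (pbind u hu m : Measure W)
    have := Kernel.integral_comp hintegr
    rw [heq, Kernel.const_apply] at this
    exact this
  simp_rw [key]
  exact ProbabilityMeasure.tendsto_iff_forall_integral_tendsto.1 tendsto_id F

/-- Tightness of intensities implies tightness. -/
lemma tight_of_intensity {Y : Type*} [TopologicalSpace Y] [TopologicalSpace.MetrizableSpace Y]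
    [MeasurableSpace Y] [BorelSpace Y]
    (M : Set (Measure (ProbabilityMeasure Y)))
    (h : IsTightMeasureSet ((fun m => m.bind (fun q : ProbabilityMeasure Y => (q : Measure Y))) '' M)) :
    IsTightMeasureSet M := by
  rw [isTightMeasureSet_iff_exists_isCompact_measure_compl_le] at h ⊢
  intro ε hε
  by_cases hεt : ε = ∞
  · exact ⟨∅, isCompact_empty, by simp [hεt]⟩
  obtain ⟨δ, hδ0, hδ⟩ := ENNReal.exists_pos_sum_of_countable' hε.ne' ℕ
  have hδt : ∀ n, δ n ≠ ∞ := fun n => ne_top_of_le_ne_top (hδ.trans_le le_top).ne (ENNReal.le_tsum n)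
  let v : ℕ → NNReal := fun n => 1 / ((n : NNReal) + 1)
  have hv : Tendsto v atTop (𝓝 0) := tendsto_one_div_add_atTop_nhds_zero_nat
  have hv0 : ∀ n, 0 < v n := fun n => by positivity
  have : ∀ n, ∃ K : Set Y, IsCompact K ∧ ∀ m ∈ M,
      (m.bind (fun q : ProbabilityMeasure Y => (q : Measure Y))) Kᶜ ≤ δ n * v n := by
    intro n
    obtain ⟨K, hK, hK'⟩ := h (δ n * v n)
      (ENNReal.mul_pos (hδ0 n).ne' (by exact_mod_cast (hv0 n).ne'))
    exact ⟨K, hK, fun m hm => hK' _ ⟨m, hm, rfl⟩⟩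
  choose K hK hKM using this
  letI := TopologicalSpace.metrizableSpaceMetric Y
  refine ⟨_, isCompact_setOfPred_probabilityMeasure_mass_eq_compl_isCompact_le hv hK
    (Or.inl inferInstance), fun m hm => ?_⟩
  have hmeas : ∀ n, Measurable (fun q : ProbabilityMeasure Y => (q : Measure Y) (K n)ᶜ) := fun n =>
    (Measure.measurable_coe (hK n).measurableSet.compl).comp measurable_subtype_coe
  have hsub : {μ : ProbabilityMeasure Y | ∀ n, μ (K n)ᶜ ≤ v n}ᶜ ⊆
      ⋃ n, {q : ProbabilityMeasure Y | (v n : ℝ≥0∞) ≤ (q : Measure Y) (K n)ᶜ} := by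
    intro q hq
    simp only [Set.mem_compl_iff, Set.mem_setOf_eq, not_forall, not_le] at hq
    obtain ⟨n, hn⟩ := hq
    refine Set.mem_iUnion.2 ⟨n, ?_⟩
    have : (v n : ℝ≥0∞) < (q (K n)ᶜ : NNReal) := by exact_mod_cast hn
    rw [ProbabilityMeasure.ennreal_coeFn_eq_coeFn_toMeasure] at this
    exact this.le
  refine (measure_mono hsub).trans ((measure_iUnion_le _).trans (le_trans ?_ hδ.le))
  refine ENNReal.tsum_le_tsum fun n => ?_
  have h1 := mul_meas_ge_le_lintegral (μ := m) (hmeas n) (v n)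
  have hb := Measure.bind_apply (m := m) (f := fun q : ProbabilityMeasure Y => (q : Measure Y))
    (hK n).measurableSet.compl measurable_subtype_coe.aemeasurable
  have h2 := (h1.trans hb.ge).trans (hKM n m hm)
  rw [mul_comm] at h2
  exact (ENNReal.mul_le_mul_iff_left (by exact_mod_cast (hv0 n).ne') ENNReal.coe_ne_top).1 h2

/-- Data transporting nested distributions to a well-behaved space `Y`. -/
structure Pkg {Y Z W : Type} [TopologicalSpace Y] [MeasurableSpace Y] [MeasurableSpace Z]
    [TopologicalSpace W] [MeasurableSpace W] [OpensMeasurableSpace W]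
    (ι : Y → Z) (d : Y → Y → ℝ≥0∞) (D : Z → Z → ℝ≥0∞) (u : Y → ProbabilityMeasure W)
    (NM : Measure W → Measure Z) : Prop where
  isoEmb : IsoEmb ι d D
  good : GoodDist d
  cont : Continuous u
  meas : Measurable u
  tight : ∀ M : Set (Measure Y), (∀ m ∈ M, IsProbabilityMeasure m) →
    IsTightMeasureSet ((fun m => m.bind (fun y => (u y : Measure W))) '' M) → IsTightMeasureSet M
  law : ∀ (α : Type) [MeasurableSpace α] (η : Kernel α W) [IsMarkovKernel η],
    ∃ n : α → ProbabilityMeasure Y, Measurable n ∧ ∀ a,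
      (n a : Measure Y).map ι = NM (η a) ∧
      (n a : Measure Y).bind (fun y => (u y : Measure W)) = η a

section Step

variable {X Y Z W V : Type} [TopologicalSpace X] [MeasurableSpace X] [BorelSpace X]
  [SecondCountableTopology X] [TopologicalSpace.MetrizableSpace X]
  [TopologicalSpace Y] [MeasurableSpace Y] [BorelSpace Y] [StandardBorelSpace Y] [Nonempty Y]
  [SecondCountableTopology Y] [TopologicalSpace.MetrizableSpace Y]
  [MeasurableSpace Z]
  [TopologicalSpace W] [MeasurableSpace W] [BorelSpace W]
  [SecondCountableTopology W] [TopologicalSpace.MetrizableSpace W]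
  [TopologicalSpace V] [MeasurableSpace V] [BorelSpace V]

/-- The lifted map from `X × 𝒫(Y)` to path measures. -/
def stepU (u : Y → ProbabilityMeasure W) (hu : Measurable u) (c : X × W → V) (hc : Measurable c)
    (z : X × ProbabilityMeasure Y) : ProbabilityMeasure V :=
  ((diracProba z.1).prod (pbind u hu z.2)).map hc.aemeasurable

lemma stepU_apply (u : Y → ProbabilityMeasure W) (hu : Measurable u) (c : X × W → V)
    (hc : Measurable c) (z : X × ProbabilityMeasure Y) (s : Set V) (hs : MeasurableSet s) :
    (stepU u hu c hc z : Measure V) s = (pbind u hu z.2 : Measure W) {w | c (z.1, w) ∈ s} := by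
  change (((Measure.dirac z.1).prod (pbind u hu z.2 : Measure W)).map c) s = _
  rw [Measure.map_apply hc hs, Measure.prod_apply (hc hs)]
  rw [lintegral_dirac' _ (measurable_measure_prodMk_left (hc hs))]
  rfl

lemma continuous_stepU {u : Y → ProbabilityMeasure W} (hcu : Continuous u) (hu : Measurable u)
    {c : X × W → V} (hcc : Continuous c) (hc : Measurable c) : Continuous (stepU u hu c hc) := by
  have h1 : Continuous (fun z : X × ProbabilityMeasure Y =>
      (diracProba z.1).prod (pbind u hu z.2)) :=
    ProbabilityMeasure.continuous_prod.comp
      ((continuous_diracProba.comp continuous_fst).prodMk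
        ((continuous_pbind hcu hu).comp continuous_snd))
  exact (ProbabilityMeasure.continuous_map hcc).comp h1

end Step


lemma Pkg.step {X Y Z W V : Type} [TopologicalSpace X] [MeasurableSpace X] [BorelSpace X]
    [SecondCountableTopology X] [TopologicalSpace.MetrizableSpace X] [StandardBorelSpace X]
    [TopologicalSpace Y] [MeasurableSpace Y] [BorelSpace Y] [StandardBorelSpace Y] [Nonempty Y]
    [SecondCountableTopology Y] [TopologicalSpace.MetrizableSpace Y]
    [MeasurableSpace Z]
    [TopologicalSpace W] [MeasurableSpace W] [BorelSpace W] [StandardBorelSpace W] [Nonempty W]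
    [SecondCountableTopology W] [TopologicalSpace.MetrizableSpace W]
    [TopologicalSpace V] [MeasurableSpace V] [BorelSpace V]
    [SecondCountableTopology V] [TopologicalSpace.MetrizableSpace V]
    {ι : Y → Z} {d : Y → Y → ℝ≥0∞} {D : Z → Z → ℝ≥0∞} {u : Y → ProbabilityMeasure W}
    {NM : Measure W → Measure Z} (h : Pkg ι d D u NM) {dX : X → X → ℝ≥0∞} (hX : GoodDist dX)
    {p : ℝ} (hp : 1 ≤ p) {c : X × W → V} {g : V → X × W} (hc : Continuous c) (hg : Continuous g)
    (hgc : ∀ z, g (c z) = z) (hcg : ∀ v, c (g v) = v)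
    {NM' : Measure V → Measure (X × Measure Z)}
    (hNM : ∀ μ, NM' μ = (μ.map (fun v => (g v).1)).map
      (fun x => (x, NM (condK (μ.map g) x)))) :
    Pkg (fun a : X × ProbabilityMeasure Y => (a.1, (a.2 : Measure Y).map ι))
      (fun a b : X × ProbabilityMeasure Y =>
        (dX a.1 b.1 ^ p + Wp p d (a.2 : Measure Y) (b.2 : Measure Y) ^ p) ^ (1 / p))
      (fun a b : X × Measure Z => (dX a.1 b.1 ^ p + Wp p D a.2 b.2 ^ p) ^ (1 / p))
      (stepU u h.meas c hc.measurable) NM' where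
  isoEmb := (h.isoEmb.wp hp).prod hX.self hX.symm hp
  good := hX.prod (h.good.wp hp) hp
  cont := continuous_stepU h.cont h.meas hc hc.measurable
  meas := (continuous_stepU h.cont h.meas hc hc.measurable).measurable
  tight M hM hT := by
    have hmu : Measurable (stepU u h.meas c hc.measurable) :=
      (continuous_stepU h.cont h.meas hc hc.measurable).measurable
    have hmu' : Measurable (fun z => (stepU u h.meas c hc.measurable z : Measure V)) :=
      measurable_subtype_coe.comp hmu
    have hg1 : Continuous fun v => (g v).1 := continuous_fst.comp hg
    have hg2 : Continuous fun v => (g v).2 := continuous_snd.comp hg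
    apply IsTightMeasureSet.prodMk
    · refine (hT.map hg1).subset ?_
      rintro _ ⟨m, hm, rfl⟩
      refine ⟨_, ⟨m, hm, rfl⟩, ?_⟩
      ext s hs
      rw [Measure.map_apply hg1.measurable hs, Measure.fst_apply hs,
        Measure.bind_apply (hg1.measurable hs) hmu'.aemeasurable,
        ← lintegral_indicator_one (measurable_fst hs)]
      refine lintegral_congr fun z => ?_
      rw [stepU_apply _ _ _ _ _ _ (hg1.measurable hs)]
      by_cases hz : z.1 ∈ s
      · simp [hgc, hz]
      · simp [hgc, hz]
    · apply tight_of_intensity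
      apply h.tight
      · rintro _ ⟨_, ⟨m, hm, rfl⟩, rfl⟩
        have := hM m hm
        have : IsProbabilityMeasure m.snd := inferInstance
        exact isProbabilityMeasure_bind measurable_subtype_coe.aemeasurable
          (ae_of_all _ fun q => q.2)
      · refine (hT.map hg2).subset ?_
        rintro _ ⟨_, ⟨_, ⟨m, hm, rfl⟩, rfl⟩, rfl⟩
        refine ⟨_, ⟨m, hm, rfl⟩, ?_⟩
        have hu' : Measurable (fun y => (u y : Measure W)) := measurable_subtype_coe.comp h.meas
        ext s hs
        have hus : Measurable (fun y => (u y : Measure W) s) :=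
          (Measure.measurable_coe hs).comp hu'
        have e1 := Measure.bind_apply (m := m.snd.bind (fun q : ProbabilityMeasure Y => (q : Measure Y)))
          hs hu'.aemeasurable
        have e2 := Measure.lintegral_bind (m := m.snd)
          (μ := fun q : ProbabilityMeasure Y => (q : Measure Y)) (f := fun y => (u y : Measure W) s)
          measurable_subtype_coe.aemeasurable hus.aemeasurable
        have hm2 : Measurable fun q : ProbabilityMeasure Y => ∫⁻ y, (u y : Measure W) s ∂(q : Measure Y) :=
          (Measure.measurable_lintegral hus).comp measurable_subtype_coe
        refine Eq.trans ?_ (e1.trans e2).symm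
        rw [Measure.snd, lintegral_map hm2 measurable_snd]
        rw [Measure.map_apply hg2.measurable hs,
          Measure.bind_apply (hg2.measurable hs) hmu'.aemeasurable]
        refine lintegral_congr fun z => ?_
        rw [stepU_apply _ _ _ _ _ _ (hg2.measurable hs)]
        simp only [Set.mem_preimage, hgc, Set.setOf_mem_eq]
        exact Measure.bind_apply hs hu'.aemeasurable
  law α _ η _ := by
    have hmu' : Measurable (fun z => (stepU u h.meas c hc.measurable z : Measure V)) :=
      measurable_subtype_coe.comp (continuous_stepU h.cont h.meas hc hc.measurable).measurable
    have hg1 : Continuous fun v => (g v).1 := continuous_fst.comp hg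
    let η' : Kernel α (X × W) := η.map g
    have : IsMarkovKernel η' := Kernel.IsMarkovKernel.map _ hg.measurable
    obtain ⟨n, hn, hn'⟩ := h.law (α × X) η'.condKernel
    have hfst : ∀ a, η'.fst a = (η a).map (fun v => (g v).1) := by
      intro a
      rw [Kernel.fst_apply, Kernel.map_apply _ hg.measurable, Measure.map_map measurable_fst hg.measurable]
      rfl
    have hna : ∀ a, Measurable (fun x => (x, n (a, x))) := fun a =>
      measurable_id.prodMk (hn.comp measurable_prodMk_left)
    let n' : α → ProbabilityMeasure (X × ProbabilityMeasure Y) := fun a =>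
      ⟨(η'.fst a).map (fun x => (x, n (a, x))), Measure.isProbabilityMeasure_map (hna a).aemeasurable⟩
    have hn'm : Measurable n' := by
      refine Measurable.subtype_mk ?_
      let κ : Kernel α (X × ProbabilityMeasure Y) :=
        (Kernel.id ×ₖ η'.fst).map (fun z : α × X => (z.2, n z))
      have hκ : ∀ a, κ a = (η'.fst a).map (fun x => (x, n (a, x))) := by
        intro a
        have hm : Measurable (fun z : α × X => (z.2, n z)) := measurable_snd.prodMk hn
        rw [Kernel.map_apply _ hm, Kernel.prod_apply, Kernel.id_apply, Measure.dirac_prod,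
          Measure.map_map hm measurable_prodMk_left]
        rfl
      simp_rw [← hκ]
      exact κ.measurable
    refine ⟨n', hn'm, fun a => ⟨?_, ?_⟩⟩
    · rw [hNM]
      change ((η'.fst a).map (fun x => (x, n (a, x)))).map _ = _
      have hιm : Measurable (fun a : X × ProbabilityMeasure Y => (a.1, (a.2 : Measure Y).map ι)) :=
        ((h.isoEmb.wp hp).prod hX.self hX.symm hp).emb.measurable
      rw [Measure.map_map hιm (hna a), ← hfst]
      refine Measure.map_congr ?_
      have hae := Kernel.condKernel_apply_eq_condKernel η' a
      filter_upwards [hae] with x hx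
      have e : (η a).map g = η' a := (Kernel.map_apply _ hg.measurable _).symm
      have hfin : IsFiniteMeasure (η' a) := inferInstance
      have e2 : condK ((η a).map g) x = η'.condKernel (a, x) := by
        rw [e, condK, dif_pos hfin]
        exact hx.symm
      simp only [Function.comp_apply]
      rw [e2, (hn' (a, x)).1]
    · ext s hs
      rw [Measure.bind_apply hs hmu'.aemeasurable]
      change ∫⁻ z, _ ∂((η'.fst a).map (fun x => (x, n (a, x)))) = _
      have hm2 : Measurable fun z => (stepU u h.meas c hc.measurable z : Measure V) s :=
        (Measure.measurable_coe hs).comp hmu'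
      rw [lintegral_map hm2 (hna a)]
      have e : η a s = η' a (c ⁻¹' s) := by
        rw [Kernel.map_apply' _ hg.measurable _ (hc.measurable hs)]
        congr 1
        ext v; simp [hcg]
      rw [e]
      conv_rhs => rw [← η'.disintegrate η'.condKernel]
      rw [Kernel.compProd_apply (hc.measurable hs)]
      refine lintegral_congr fun x => ?_
      rw [stepU_apply _ _ _ _ _ _ hs]
      change (((n (a, x) : Measure Y).bind (fun y => (u y : Measure W)))) _ = _
      rw [(hn' (a, x)).2]
      rfl


/-- The base case of the construction. -/
lemma Pkg.base {X : Type} [TopologicalSpace X] [MeasurableSpace X] [BorelSpace X]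
    [SecondCountableTopology X] [TopologicalSpace.MetrizableSpace X]
    {dX : X → X → ℝ≥0∞} (hX : GoodDist dX) :
    Pkg (W := Fin 1 → X) (fun x : X => x) dX dX (fun x => diracProba (fun _ => x))
      (fun μ => μ.map (fun x => x 0)) := by
  have hcont : Continuous (fun x : X => diracProba (fun _ : Fin 1 => x)) :=
    continuous_diracProba.comp (by fun_prop)
  have hm : Measurable (fun x : X => ((diracProba (fun _ : Fin 1 => x) : ProbabilityMeasure _) :
      Measure (Fin 1 → X))) := measurable_subtype_coe.comp hcont.measurable
  have hc1 : Measurable (fun (x : X) (_ : Fin 1) => x) := by fun_prop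
  have hbind : ∀ m : Measure X, m.bind (fun x : X =>
      ((diracProba (fun _ : Fin 1 => x) : ProbabilityMeasure _) : Measure (Fin 1 → X))) =
      m.map (fun x _ => x) := by
    intro m
    ext s hs
    rw [Measure.bind_apply hs hm.aemeasurable, Measure.map_apply hc1 hs,
      ← lintegral_indicator_one (hc1 hs)]
    refine lintegral_congr fun x => ?_
    change Measure.dirac _ s = _
    rw [Measure.dirac_apply' _ hs]
    rfl
  have h0 : Continuous (fun x : Fin 1 → X => x 0) := continuous_apply 0
  refine ⟨⟨MeasurableEmbedding.id, fun _ _ => rfl, fun a z hz => absurd ⟨z, rfl⟩ hz, hX.symm,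
    hX.self⟩, hX, hcont, hcont.measurable, ?_, ?_⟩
  · intro M _ hT
    refine (hT.map h0).subset ?_
    intro m hm
    refine ⟨_, ⟨m, hm, rfl⟩, ?_⟩
    simp only [hbind]
    rw [Measure.map_map h0.measurable hc1]
    exact Measure.map_id
  · intro α _ η _
    have hk := (η.map (fun x : Fin 1 → X => x 0)).measurable
    have hk' : ∀ a, η.map (fun x : Fin 1 → X => x 0) a = (η a).map (fun x => x 0) :=
      fun a => Kernel.map_apply _ h0.measurable _
    refine ⟨fun a => ⟨(η a).map (fun x => x 0),
      Measure.isProbabilityMeasure_map h0.measurable.aemeasurable⟩, ?_, fun a => ⟨?_, ?_⟩⟩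
    · refine Measurable.subtype_mk ?_
      simp_rw [← hk']
      exact hk
    · exact Measure.map_id
    · refine (hbind _).trans ?_
      change ((η a).map (fun x => x 0)).map (fun x _ => x) = _
      rw [Measure.map_map hc1 h0.measurable]
      convert! Measure.map_id using 2
      ext x i
      simp [Subsingleton.elim i 0]

/-- Existence of the package for every depth. -/
lemma exists_pkg {X : Type} [TopologicalSpace X] [MeasurableSpace X] [BorelSpace X]
    [PolishSpace X] [Nonempty X]
    {dX : X → X → ℝ≥0∞} (hX : GoodDist dX) {p : ℝ} (hp : 1 ≤ p) (k : ℕ) :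
    ∃ (Y : Type) (_ : TopologicalSpace Y) (_ : MeasurableSpace Y) (_ : BorelSpace Y)
      (_ : StandardBorelSpace Y) (_ : Nonempty Y) (_ : SecondCountableTopology Y)
      (_ : TopologicalSpace.MetrizableSpace Y) (ι : Y → (nest X ‹_› dX p k).carrier)
      (d : Y → Y → ℝ≥0∞) (u : Y → ProbabilityMeasure (Fin (k + 1) → X)),
      @Pkg Y (nest X ‹_› dX p k).carrier (Fin (k + 1) → X) _ _ (nest X ‹_› dX p k).inst _ _ _
        ι d (nest X ‹_› dX p k).dist u (NMap X dX p k) := by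
  induction k with
  | zero => exact ⟨X, _, _, ‹_›, inferInstance, ‹_›, inferInstance, inferInstance, _, _, _, Pkg.base hX⟩
  | succ k ih =>
    obtain ⟨Y, _, _, _, _, _, _, _, ι, d, u, h⟩ := ih
    letI : MeasurableSpace (nest X ‹_› dX p k).carrier := (nest X ‹_› dX p k).inst
    have hne : Nonempty (ProbabilityMeasure Y) := ⟨diracProba (Classical.arbitrary Y)⟩
    have hc : Continuous (fun z : X × (Fin (k + 1) → X) => (Fin.cons z.1 z.2 : Fin (k + 2) → X)) := by
      fun_prop
    have hg : Continuous (fun v : Fin (k + 2) → X => (v 0, fun s : Fin (k + 1) => v s.succ)) := by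
      fun_prop
    exact ⟨X × ProbabilityMeasure Y, inferInstance, inferInstance, inferInstance, inferInstance,
      inferInstance, inferInstance, inferInstance, _, _, _,
      h.step hX hp hc hg (fun z => by simp) (fun v => by
        ext i; refine Fin.cases ?_ (fun j => ?_) i <;> simp)
        (NM' := NMap X dX p (k + 1)) (fun μ => rfl)⟩

/-- **Compactness lemma.**  For bounded `ρ`, a set `A ⊆ 𝒫(X̄)` is relatively
compact for the weak topology iff `𝒩[A] ⊆ 𝒫(𝒳_1)` is relatively compact for the
nested Wasserstein distance `𝒲_{D_1,p}`.  Here `N = k + 1`. -/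
theorem compactness_lemma
    {X : Type} [MetricSpace X] [CompleteSpace X] [SecondCountableTopology X]
    [MeasurableSpace X] [BorelSpace X] [Nonempty X]
    (hbdd : EMetric.diam (Set.univ : Set X) ≠ ∞)
    (p : ℝ) (hp : 1 ≤ p) (k : ℕ)
    (A : Set (ProbabilityMeasure (Fin (k + 1) → X))) :
    let d : X → X → ℝ≥0∞ := edist
    let Q := nest X ‹MeasurableSpace X› d p k
    let dW := @Wp Q.carrier Q.inst p Q.dist
    let PQ := {m : @Measure Q.carrier Q.inst // @IsProbabilityMeasure Q.carrier Q.inst m}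
    let τQ : TopologicalSpace PQ := ballTop (fun m m' => dW m.1 m'.1)
    (IsCompact (closure A) ↔
      @IsCompact PQ τQ (@closure PQ τQ
        {m : PQ | ∃ μ ∈ A, m.1 = NMap X d p k μ.toMeasure})) := by
  intro d Q dW PQ τQ
  have hX : GoodDist d :=
    goodDist_edist hbdd fun x y => EMetric.edist_le_diam_of_mem (Set.mem_univ x) (Set.mem_univ y)
  obtain ⟨Y, _, _, _, _, _, _, _, ι, e, u, h⟩ := exists_pkg hX hp k
  letI : MeasurableSpace Q.carrier := Q.inst
  letI : TopologicalSpace PQ := τQ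
  let κ : Kernel (ProbabilityMeasure (Fin (k + 1) → X)) (Fin (k + 1) → X) :=
    ⟨fun μ => (μ : Measure (Fin (k + 1) → X)), measurable_subtype_coe⟩
  have hκ : IsMarkovKernel κ := ⟨fun μ => μ.2⟩
  obtain ⟨n, hn, hn'⟩ := h.law _ κ
  let Φ : ProbabilityMeasure Y → PQ := fun q =>
    ⟨(q : Measure Y).map ι, Measure.isProbabilityMeasure_map h.isoEmb.emb.measurable.aemeasurable⟩
  have hΦ : IsClosedEmbedding Φ :=
    (h.isoEmb.wp hp).isClosedEmbedding (h.good.wp hp) (fun m => IsProbabilityMeasure m)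
      (fun q => Measure.isProbabilityMeasure_map h.isoEmb.emb.measurable.aemeasurable)
  have hset : {m : PQ | ∃ μ ∈ A, m.1 = NMap X d p k μ.toMeasure} = Φ '' (n '' A) := by
    ext m
    constructor
    · rintro ⟨μ, hμ, hm⟩
      exact ⟨_, ⟨μ, hμ, rfl⟩, Subtype.ext ((hn' μ).1.trans hm.symm)⟩
    · rintro ⟨_, ⟨μ, hμ, rfl⟩, rfl⟩
      exact ⟨μ, hμ, (hn' μ).1⟩
  have hpb : ∀ μ, pbind u h.meas (n μ) = μ := fun μ => Subtype.ext (hn' μ).2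
  rw [hset, hΦ.closure_image_eq, ← hΦ.isEmbedding.isCompact_iff]
  constructor
  · intro hA
    have hT := isTightMeasureSet_of_isCompact_closure hA
    refine isCompact_closure_of_isTightMeasureSet (h.tight _ ?_ ?_)
    · rintro _ ⟨q, _, rfl⟩
      exact q.2
    · refine hT.subset ?_
      rintro _ ⟨_, ⟨_, ⟨μ, hμ, rfl⟩, rfl⟩, rfl⟩
      exact ⟨μ, hμ, ((hn' μ).2).symm⟩
  · intro hS
    refine (hS.image (continuous_pbind h.cont h.meas)).closure_of_subset ?_
    intro μ hμ
    exact ⟨n μ, subset_closure ⟨μ, hμ, rfl⟩, hpb μ⟩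

end AWPaper
end
end

section
/- Let A, B, Y be Polish metric spaces. The disintegration map disint_A : 𝒫_p(A × B × Y) → 𝒫_p(A × 𝒫_p(B × Y)), restricted to FP(A × B, Y), maps FP(A × B, Y) onto FP(A, FP(B, Y)). In particular: (i) if μ ∈ 𝒫_p(A × B × Y) is concentrated on the graph of a Borel function g : A × B → Y, then for the regular conditional law a ↦ μ_a of the (B,Y)-coordinates given the A-coordinate, μ_a is concentrated on the graph of b ↦ g(a,b) for μ-a.e. a (so disint_A(μ) ∈ FP(A, FP(B,Y))); and (ii) every α ∈ FP(A, FP(B, Y)) equals disint_A(ν) for some ν ∈ FP(A × B, Y). -/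
open MeasureTheory ProbabilityTheory ENNReal Filter Topology

noncomputable section

namespace AWPaper

/-! ### Generic constructions -/

variable {α β : Type*}

/-! ### Path spaces -/

variable {X : Type*} [MeasurableSpace X]

/-! ### Helper lemmas -/

/-- A set of full measure which is measurable after intersection with probability
measures in the second coordinate. -/
theorem ae_eq_graph {A C : Type*} [MeasurableSpace A] [MeasurableSpace C]
    [MeasurableSpace.CountablyGenerated C]
    (α : Measure (A × Measure C)) [IsProbabilityMeasure α]
    (hα : ∀ᵐ z ∂α, IsProbabilityMeasure z.2)
    (G : A → Measure C) (hG : Measurable G) (h1 : α {z | z.2 = G z.1} = 1) :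
    ∀ᵐ z ∂α, z.2 = G z.1 := by
  let S := generateSetAlgebra (MeasurableSpace.countableGeneratingSet C)
  have hSc : S.Countable :=
    countable_generateSetAlgebra (MeasurableSpace.countable_countableGeneratingSet)
  have hSg : ‹MeasurableSpace C› = MeasurableSpace.generateFrom S := by
    rw [generateFrom_generateSetAlgebra_eq, MeasurableSpace.generateFrom_countableGeneratingSet]
  have hSm : ∀ s ∈ S, MeasurableSet s := fun s hs => by
    rw [hSg]; exact MeasurableSpace.measurableSet_generateFrom hs
  have hSpi : IsPiSystem S := fun s hs t ht _ =>
    (isSetAlgebra_generateSetAlgebra).inter_mem hs ht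
  let P : Set (A × Measure C) := {z | z.2 Set.univ = 1 ∧ G z.1 Set.univ = 1 ∧
    ∀ s ∈ S, z.2 s = G z.1 s}
  have hPm : MeasurableSet P := by
    have e1 : ∀ s, MeasurableSet s → Measurable fun z : A × Measure C => z.2 s :=
      fun s hs => (Measure.measurable_coe hs).comp measurable_snd
    have e2 : ∀ s, MeasurableSet s → Measurable fun z : A × Measure C => G z.1 s :=
      fun s hs => (Measure.measurable_coe hs).comp (hG.comp measurable_fst)
    have : P = {z | z.2 Set.univ = 1} ∩ ({z | G z.1 Set.univ = 1} ∩
        ⋂ s ∈ S, {z | z.2 s = G z.1 s}) := by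
      ext z; simp [P]
    rw [this]
    refine (measurableSet_eq_fun (e1 _ .univ) measurable_const).inter
      ((measurableSet_eq_fun (e2 _ .univ) measurable_const).inter ?_)
    exact MeasurableSet.biInter hSc fun s hs =>
      measurableSet_eq_fun (e1 _ (hSm s hs)) (e2 _ (hSm s hs))
  have hP1 : α P = 1 := by
    apply le_antisymm prob_le_one
    rw [← h1]
    apply measure_mono_ae
    filter_upwards [hα] with z hz hz2
    have hz2 : z.2 = G z.1 := hz2
    refine ⟨hz.measure_univ, ?_, fun s _ => by rw [hz2]⟩
    rw [← hz2]; exact hz.measure_univ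
  have : ∀ᵐ z ∂α, z ∈ P := (prob_compl_eq_zero_iff hPm).2 hP1
  filter_upwards [this] with z hz
  haveI : IsProbabilityMeasure z.2 := ⟨hz.1⟩
  exact ext_of_generate_finite S hSg hSpi hz.2.2 (hz.1.trans hz.2.1.symm)

/-- Measurable selection of the function carrying a kernel with graph values. -/
theorem exists_graph_fun {A B Y : Type*} [MeasurableSpace A] [MeasurableSpace B]
    [MeasurableSpace Y] [StandardBorelSpace B] [StandardBorelSpace Y] [Nonempty Y]
    (κ : Kernel A (B × Y)) [IsMarkovKernel κ] :
    ∃ g : A × B → Y, Measurable g ∧ ∀ a, (∃ h : B → Y, Measurable h ∧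
      κ a {w | w.2 = h w.1} = 1) → ∀ᵐ w ∂κ a, w.2 = g (a, w.1) := by
  have he := measurableEmbedding_embeddingReal Y
  obtain ⟨r, hr, hre⟩ := he.exists_measurable_extend measurable_id (fun _ => inferInstance)
  have hint : Measurable fun z : A × B => ∫ y, embeddingReal Y y ∂(κ.condKernel z) := by
    have : StronglyMeasurable fun q : (A × B) × Y => embeddingReal Y q.2 :=
      (he.measurable.comp measurable_snd).stronglyMeasurable
    exact (this.integral_kernel_prod_right' (κ := κ.condKernel)).measurable
  refine ⟨fun z => r (∫ y, embeddingReal Y y ∂(κ.condKernel z)), hr.comp hint, ?_⟩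
  rintro a ⟨h, hh, h1⟩
  have hm : MeasurableSet {w : B × Y | w.2 = h w.1} :=
    measurableSet_eq_fun measurable_snd (hh.comp measurable_fst)
  have hae : ∀ᵐ w ∂κ a, w.2 = h w.1 := (prob_compl_eq_zero_iff hm).2 h1
  have hae' := hae
  rw [← κ.disintegrate κ.condKernel] at hae'
  have h2 := Kernel.ae_ae_of_ae_compProd hae'
  have h3 : ∀ᵐ b ∂(κ.fst a), h b = r (∫ y, embeddingReal Y y ∂(κ.condKernel (a, b))) := by
    filter_upwards [h2] with b hb
    have : ∫ y, embeddingReal Y y ∂(κ.condKernel (a, b)) = embeddingReal Y (h b) := by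
      rw [integral_congr_ae (g := fun _ => embeddingReal Y (h b))]
      · simp
      · filter_upwards [hb] with y hy
        have hy : y = h b := hy
        rw [hy]
    rw [this]
    exact (congrFun hre (h b)).symm
  rw [Kernel.fst_apply] at h3
  have h4 := ae_of_ae_map measurable_fst.aemeasurable h3
  filter_upwards [hae, h4] with w hw hw2
  rw [hw, hw2]

theorem prodDist_rpow {α β : Type*} (p : ℝ) (hp : 1 ≤ p) (d₁ : α → α → ℝ≥0∞)
    (d₂ : β → β → ℝ≥0∞) (u v : α × β) :
    prodDist p d₁ d₂ u v ^ p = d₁ u.1 v.1 ^ p + d₂ u.2 v.2 ^ p := by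
  rw [prodDist, ← ENNReal.rpow_mul, one_div, inv_mul_cancel₀ (by positivity), ENNReal.rpow_one]

section Moments

variable {B Y : Type*} [MetricSpace B] [SecondCountableTopology B]
    [MeasurableSpace B] [BorelSpace B]
    [MetricSpace Y] [SecondCountableTopology Y]
    [MeasurableSpace Y] [BorelSpace Y]

theorem dBY_tri (p : ℝ) (hp : 1 ≤ p) (u v w : B × Y) :
    prodDist p edist edist u w ^ p ≤
      (2 : ℝ≥0∞) ^ (p - 1) * (prodDist p edist edist u v ^ p + prodDist p edist edist v w ^ p) := by
  simp only [prodDist_rpow p hp]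
  have h0 : 0 ≤ p := by linarith
  have h1 := (ENNReal.rpow_le_rpow (edist_triangle u.1 v.1 w.1) h0).trans
    (ENNReal.rpow_add_le_mul_rpow_add_rpow _ _ hp)
  have h2 := (ENNReal.rpow_le_rpow (edist_triangle u.2 v.2 w.2) h0).trans
    (ENNReal.rpow_add_le_mul_rpow_add_rpow _ _ hp)
  refine (add_le_add h1 h2).trans (le_of_eq ?_)
  ring

theorem dBY_comm (p : ℝ) (u v : B × Y) :
    prodDist p edist edist u v = prodDist p edist edist v u := by
  simp only [prodDist, edist_comm]

theorem dBY_meas (p : ℝ) (hp : 1 ≤ p) :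
    Measurable fun z : (B × Y) × (B × Y) => prodDist p edist edist z.1 z.2 ^ p := by
  simp only [prodDist_rpow p hp]
  have h1 : Measurable fun z : (B × Y) × (B × Y) => edist z.1.1 z.2.1 :=
    (measurable_fst.comp measurable_fst).edist (measurable_fst.comp measurable_snd)
  have h2 : Measurable fun z : (B × Y) × (B × Y) => edist z.1.2 z.2.2 :=
    (measurable_snd.comp measurable_fst).edist (measurable_snd.comp measurable_snd)
  exact (h1.pow_const p).add (h2.pow_const p)

theorem moment_cpl (p : ℝ) (hp : 1 ≤ p) (m m' : Measure (B × Y))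
    (π : Measure ((B × Y) × (B × Y))) (hπ : π ∈ Cpl m m') (w₀ : B × Y) :
    ∫⁻ w, prodDist p edist edist w₀ w ^ p ∂m' ≤ (2 : ℝ≥0∞) ^ (p - 1) *
      (∫⁻ w, prodDist p edist edist w₀ w ^ p ∂m +
        ∫⁻ z, prodDist p edist edist z.1 z.2 ^ p ∂π) := by
  have hm : Measurable fun w : B × Y => prodDist p edist edist w₀ w ^ p :=
    (dBY_meas p hp).comp (measurable_const.prodMk measurable_id)
  have hm2 : Measurable fun z : (B × Y) × (B × Y) =>
      prodDist p edist edist w₀ z.1 ^ p := hm.comp measurable_fst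
  obtain ⟨h1, h2⟩ := hπ
  rw [← h1, ← h2, lintegral_map hm measurable_snd, lintegral_map hm measurable_fst,
    ← lintegral_add_left hm2, ← lintegral_const_mul]
  · exact lintegral_mono fun z => dBY_tri p hp _ _ _
  · exact hm2.add (dBY_meas p hp)

theorem moment_cpl' (p : ℝ) (hp : 1 ≤ p) (m m' : Measure (B × Y))
    (π : Measure ((B × Y) × (B × Y))) (hπ : π ∈ Cpl m m') (w₀ : B × Y) :
    ∫⁻ w, prodDist p edist edist w₀ w ^ p ∂m ≤ (2 : ℝ≥0∞) ^ (p - 1) *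
      (∫⁻ w, prodDist p edist edist w₀ w ^ p ∂m' +
        ∫⁻ z, prodDist p edist edist z.1 z.2 ^ p ∂π) := by
  have hm : Measurable fun w : B × Y => prodDist p edist edist w₀ w ^ p :=
    (dBY_meas p hp).comp (measurable_const.prodMk measurable_id)
  have hm2 : Measurable fun z : (B × Y) × (B × Y) =>
      prodDist p edist edist w₀ z.2 ^ p := hm.comp measurable_snd
  obtain ⟨h1, h2⟩ := hπ
  rw [← h1, ← h2, lintegral_map hm measurable_snd, lintegral_map hm measurable_fst,
    ← lintegral_add_left hm2, ← lintegral_const_mul]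
  · refine lintegral_mono fun z => ?_
    have := dBY_tri p hp w₀ z.2 z.1
    rwa [dBY_comm p z.2 z.1] at this
  · exact hm2.add (dBY_meas p hp)

theorem moment_Wp (p : ℝ) (hp : 1 ≤ p) (m m' : Measure (B × Y)) (w₀ : B × Y) :
    ∫⁻ w, prodDist p edist edist w₀ w ^ p ∂m' ≤ (2 : ℝ≥0∞) ^ (p - 1) *
      (∫⁻ w, prodDist p edist edist w₀ w ^ p ∂m +
        Wp p (prodDist p edist edist) m m' ^ p) := by
  have hC0 : (2 : ℝ≥0∞) ^ (p - 1) ≠ 0 := by simp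
  have hCt : (2 : ℝ≥0∞) ^ (p - 1) ≠ ∞ :=
    ENNReal.rpow_ne_top_of_nonneg (by linarith) (by simp)
  have hp0 : 0 < p := by linarith
  set M := ∫⁻ w, prodDist p edist edist w₀ w ^ p ∂m'
  set K := ∫⁻ w, prodDist p edist edist w₀ w ^ p ∂m
  set C := (2 : ℝ≥0∞) ^ (p - 1)
  have key : (M / C - K) ^ (1 / p) ≤ Wp p (prodDist p edist edist) m m' := by
    rw [Wp]
    refine le_iInf₂ fun π hπ => ?_
    refine ENNReal.rpow_le_rpow ?_ (by positivity)
    rw [tsub_le_iff_left]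
    exact ENNReal.div_le_of_le_mul' (moment_cpl p hp m m' π hπ w₀)
  have key2 : M / C - K ≤ Wp p (prodDist p edist edist) m m' ^ p := by
    have := ENNReal.rpow_le_rpow key hp0.le
    rwa [← ENNReal.rpow_mul, one_div, inv_mul_cancel₀ hp0.ne', ENNReal.rpow_one] at this
  rw [tsub_le_iff_left] at key2
  rw [mul_comm]
  exact (ENNReal.div_le_iff hC0 hCt).1 key2

end Moments

/-- **Lemma 2.1.**  The disintegration map, restricted to `FP(A × B, Y)`, maps
`FP(A × B, Y)` onto `FP(A, FP(B, Y))`. -/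
theorem disint_maps_FP_onto_FP
    {A B Y : Type} [MetricSpace A] [CompleteSpace A] [SecondCountableTopology A]
    [MeasurableSpace A] [BorelSpace A] [Nonempty A]
    [MetricSpace B] [CompleteSpace B] [SecondCountableTopology B]
    [MeasurableSpace B] [BorelSpace B] [Nonempty B]
    [MetricSpace Y] [CompleteSpace Y] [SecondCountableTopology Y]
    [MeasurableSpace Y] [BorelSpace Y] [Nonempty Y]
    (p : ℝ) (hp : 1 ≤ p) :
    let dA : A → A → ℝ≥0∞ := edist
    let dB : B → B → ℝ≥0∞ := edist
    let dY : Y → Y → ℝ≥0∞ := edist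
    let dBY := prodDist p dB dY
    let d3 := prodDist p dA dBY
    let dLift := prodDist p dA (Wp p dBY)
    -- (i) disintegrating an element of `FP(A × B, Y)` yields an element of
    --     `FP(A, FP(B, Y))`: a.e. conditional law is carried by a graph
    ((∀ (μ : Measure (A × B × Y)) (g : A × B → Y),
        MemPp p d3 μ → Measurable g → μ {z | z.2.2 = g (z.1, z.2.1)} = 1 →
        ∀ᵐ a ∂(μ.map Prod.fst),
          (condK μ) a {w : B × Y | w.2 = g (a, w.1)} = 1) ∧
    -- (ii) every element of `FP(A, FP(B, Y))` arises as such a disintegration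
     (∀ α : Measure (A × Measure (B × Y)),
        MemPp p dLift α →
        (∃ G : A → Measure (B × Y), Measurable G ∧ α {z | z.2 = G z.1} = 1) →
        (∀ᵐ z ∂α, MemPp p dBY z.2 ∧
          ∃ h : B → Y, Measurable h ∧ z.2 {w | w.2 = h w.1} = 1) →
        ∃ ν : Measure (A × B × Y),
          MemPp p d3 ν ∧
          (∃ g : A × B → Y, Measurable g ∧ ν {z | z.2.2 = g (z.1, z.2.1)} = 1) ∧
          disint ν = α)) := by
  intro dA dB dY dBY d3 dLift
  have hp0 : 0 < p := by linarith
  constructor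
  · rintro μ g ⟨hμ, -⟩ hg h1
    have hm : MeasurableSet {z : A × B × Y | z.2.2 = g (z.1, z.2.1)} :=
      measurableSet_eq_fun (by fun_prop) (by fun_prop)
    have hae : ∀ᵐ z ∂μ, z.2.2 = g (z.1, z.2.1) := (prob_compl_eq_zero_iff hm).2 h1
    have hK : condK μ = μ.condKernel := by
      have hfin : IsFiniteMeasure μ := inferInstance
      exact dif_pos hfin
    rw [hK]
    rw [← μ.disintegrate μ.condKernel] at hae
    have h2 := Measure.ae_ae_of_ae_compProd hae
    change ∀ᵐ a ∂μ.fst, _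
    filter_upwards [h2] with a ha
    have hma : MeasurableSet {w : B × Y | w.2 = g (a, w.1)} :=
      measurableSet_eq_fun (by fun_prop) (by fun_prop)
    exact (prob_compl_eq_zero_iff hma).1 ha
  · rintro α ⟨hα, x₀, hx₀⟩ ⟨G, hG, hG1⟩ hae
    have hprob : ∀ᵐ z ∂α, IsProbabilityMeasure z.2 := by
      filter_upwards [hae] with z hz using hz.1.1
    have hgr := ae_eq_graph α hprob G hG hG1
    classical
    obtain ⟨c⟩ : Nonempty (B × Y) := inferInstance
    have hPm : MeasurableSet {a | G a Set.univ = 1} :=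
      measurableSet_eq_fun ((Measure.measurable_coe .univ).comp hG) measurable_const
    let κ : Kernel A (B × Y) :=
      ⟨fun a => if G a Set.univ = 1 then G a else Measure.dirac c,
        Measurable.ite hPm hG measurable_const⟩
    have hκa : ∀ a, κ a = if G a Set.univ = 1 then G a else Measure.dirac c := fun _ => rfl
    haveI : IsMarkovKernel κ := ⟨fun a => by
      rw [hκa]; split_ifs with h
      · exact ⟨h⟩
      · infer_instance⟩
    have hκ : ∀ᵐ z ∂α, z.2 = κ z.1 := by
      filter_upwards [hgr, hprob] with z hz hz2
      rw [hκa, if_pos, hz]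
      rw [← hz]; exact hz2.measure_univ
    have hκm : Measurable fun a => (a, κ a) := measurable_id.prodMk κ.measurable
    haveI : IsProbabilityMeasure α.fst := inferInstance
    have hαmap : α.fst.map (fun a => (a, κ a)) = α := by
      rw [Measure.fst, Measure.map_map hκm measurable_fst]
      conv_rhs => rw [← Measure.map_id (μ := α)]
      refine Measure.map_congr ?_
      filter_upwards [hκ] with z hz
      exact Prod.ext rfl hz.symm
    let ν : Measure (A × B × Y) := α.fst ⊗ₘ κ
    have hνfst : ν.fst = α.fst := Measure.fst_compProd _ _
    have hκae : ∀ᵐ a ∂α.fst, MemPp p dBY (κ a) ∧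
        ∃ h : B → Y, Measurable h ∧ κ a {w | w.2 = h w.1} = 1 := by
      have := hae
      rw [← hαmap] at this
      exact ae_of_ae_map hκm.aemeasurable this
    refine ⟨ν, ⟨inferInstance, ?_⟩, ?_, ?_⟩
    · -- moments
      have hlin : ∃ z, dLift x₀ z ^ p ≠ ∞ ∧ MemPp p dBY z.2 := by
        by_contra hcon
        push Not at hcon
        apply hx₀
        have : ∀ᵐ z ∂α, dLift x₀ z ^ p = ∞ := by
          filter_upwards [hae] with z hz
          by_contra h
          exact hcon z h hz.1
        rw [lintegral_congr_ae this]
        simp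
      obtain ⟨z₁, hz₁, -, w₀, hw₀⟩ := hlin
      have hK : ∫⁻ w, dBY w₀ w ^ p ∂x₀.2 ≠ ∞ := by
        have h1 : dLift x₀ z₁ ^ p = dA x₀.1 z₁.1 ^ p + Wp p dBY x₀.2 z₁.2 ^ p :=
          prodDist_rpow p hp _ _ _ _
        rw [h1] at hz₁
        have h2 : Wp p dBY x₀.2 z₁.2 ≠ ∞ := by
          intro h
          apply hz₁
          rw [h, ENNReal.top_rpow_of_pos hp0]; simp
        have h3 := lt_top_iff_ne_top.2 h2
        rw [Wp] at h3
        simp only [iInf_lt_iff] at h3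
        obtain ⟨π, hπ, h4⟩ := h3
        refine ne_top_of_le_ne_top ?_ (moment_cpl' p hp _ _ π hπ w₀)
        refine ENNReal.mul_ne_top (ENNReal.rpow_ne_top_of_nonneg (by linarith) (by simp))
          (ENNReal.add_ne_top.2 ⟨hw₀, ?_⟩)
        intro h
        rw [h, ENNReal.top_rpow_of_pos (by positivity)] at h4
        exact lt_irrefl _ h4
      refine ⟨(x₀.1, w₀), ?_⟩
      have hd3 : ∀ z, d3 (x₀.1, w₀) z ^ p = dA x₀.1 z.1 ^ p + dBY w₀ z.2 ^ p :=
        fun z => prodDist_rpow p hp _ _ _ _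
      have hmA : Measurable fun a : A => dA x₀.1 a ^ p :=
        (measurable_const.edist measurable_id).pow_const p
      have hmw : Measurable fun w : B × Y => dBY w₀ w ^ p :=
        (dBY_meas p hp).comp (measurable_const.prodMk measurable_id)
      simp only [hd3]
      have hm3 : Measurable fun z : A × B × Y => dA x₀.1 z.1 ^ p + dBY w₀ z.2 ^ p :=
        (hmA.comp measurable_fst).add (hmw.comp measurable_snd)
      rw [Measure.lintegral_compProd hm3]
      have hF : ∀ a, ∫⁻ w, (dA x₀.1 a ^ p + dBY w₀ w ^ p) ∂κ a =
          dA x₀.1 a ^ p + ∫⁻ w, dBY w₀ w ^ p ∂κ a := by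
        intro a
        rw [lintegral_add_left measurable_const]
        simp
      simp only [hF]
      have hFm : Measurable fun a => dA x₀.1 a ^ p + ∫⁻ w, dBY w₀ w ^ p ∂κ a :=
        hmA.add hmw.lintegral_kernel
      rw [Measure.fst, lintegral_map hFm measurable_fst]
      have hC1 : 1 ≤ (2 : ℝ≥0∞) ^ (p - 1) :=
        le_of_eq_of_le (ENNReal.one_rpow (p - 1)).symm
          (ENNReal.rpow_le_rpow (by norm_num) (by linarith))
      have hCt : (2 : ℝ≥0∞) ^ (p - 1) ≠ ∞ :=
        ENNReal.rpow_ne_top_of_nonneg (by linarith) (by simp)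
      have hbd : ∀ᵐ z ∂α, dA x₀.1 z.1 ^ p + ∫⁻ w, dBY w₀ w ^ p ∂κ z.1 ≤
          (2 : ℝ≥0∞) ^ (p - 1) * (dLift x₀ z ^ p + ∫⁻ w, dBY w₀ w ^ p ∂x₀.2) := by
        filter_upwards [hκ] with z hz
        rw [← hz]
        have h1 : dLift x₀ z ^ p = dA x₀.1 z.1 ^ p + Wp p dBY x₀.2 z.2 ^ p :=
          prodDist_rpow p hp _ _ _ _
        rw [h1]
        calc _ ≤ (2 : ℝ≥0∞) ^ (p - 1) * dA x₀.1 z.1 ^ p + _ :=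
              add_le_add (le_mul_of_one_le_left' hC1) (moment_Wp p hp x₀.2 z.2 w₀)
          _ = _ := by ring
      refine ne_top_of_le_ne_top ?_ (lintegral_mono_ae hbd)
      rw [lintegral_const_mul' _ _ hCt, lintegral_add_right _ measurable_const]
      refine ENNReal.mul_ne_top hCt (ENNReal.add_ne_top.2 ⟨hx₀, ?_⟩)
      simpa using hK
    · obtain ⟨g, hg, hgκ⟩ := exists_graph_fun κ
      refine ⟨g, hg, ?_⟩
      have hm : MeasurableSet {z : A × B × Y | z.2.2 = g (z.1, z.2.1)} :=
        measurableSet_eq_fun (by fun_prop) (by fun_prop)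
      refine (prob_compl_eq_zero_iff hm).1 ?_
      change ∀ᵐ z ∂ν, z.2.2 = g (z.1, z.2.1)
      rw [Measure.ae_compProd_iff hm]
      filter_upwards [hκae] with a ha
      exact hgκ a ha.2
    · have hK : condK ν = ν.condKernel := by
        have hfin : IsFiniteMeasure ν := inferInstance
        exact dif_pos hfin
      have heq := eq_condKernel_of_measure_eq_compProd (ρ := ν) κ (by rw [hνfst])
      rw [hνfst] at heq
      rw [disint, hK]
      have hm1 : Measurable fun a => (a, ν.condKernel a) :=
        measurable_id.prodMk ν.condKernel.measurable
      have : (fun z : A × B × Y => (z.1, ν.condKernel z.1)) =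
        (fun a => (a, ν.condKernel a)) ∘ Prod.fst := rfl
      rw [this, ← Measure.map_map hm1 measurable_fst]
      change ν.fst.map _ = α
      rw [hνfst]
      conv_rhs => rw [← hαmap]
      refine Measure.map_congr ?_
      filter_upwards [heq] with a ha
      rw [ha]

end AWPaper
end
end
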